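/- arXiv:1304.6607 — 3 statements merged into one kernel-verified Lean document; each statement's English description precedes it below -/
import Mathlib

section
/- Let L ⊆ ℤ^m be a nonzero positive lattice and let E ∈ T_min. Then: (1) there exists no circuit u of Sat(L) such that supp(u⁺) ⊊ E or supp(u⁻) ⊊ E; and (2) there exists a circuit u of Sat(L) such that supp(u⁺) = E or supp(u⁻) = E. -/
open MvPolynomial

variable (K : Type*) [Field K]

/-- The monomial `x^w`. -/
noncomputable def mono {m : ℕ} (w : Fin m → ℕ) : MvPolynomial (Fin m) K :=
  ∏ i, X i ^ w i

/-- The positive part `u⁺` of an integer vector. -/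
def intPos {m : ℕ} (u : Fin m → ℤ) : Fin m → ℕ := fun i => (u i).toNat

/-- The negative part `u⁻` of an integer vector. -/
def intNeg {m : ℕ} (u : Fin m → ℤ) : Fin m → ℕ := fun i => (-u i).toNat

/-- Support of a vector of naturals. -/
def suppN {m : ℕ} (w : Fin m → ℕ) : Set (Fin m) := {i | w i ≠ 0}

/-- Support of a vector of integers. -/
def suppZ {m : ℕ} (u : Fin m → ℤ) : Set (Fin m) := {i | u i ≠ 0}

/-- The lattice ideal `I_L`. -/
noncomputable def latticeIdeal {m : ℕ} (L : AddSubgroup (Fin m → ℤ)) :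
    Ideal (MvPolynomial (Fin m) K) :=
  Ideal.span {f | ∃ u ∈ L, f = mono K (intPos u) - mono K (intNeg u)}

/-- A binomial: a difference of two monomials. -/
def IsBinomial {m : ℕ} (f : MvPolynomial (Fin m) K) : Prop :=
  ∃ u v : Fin m → ℕ, f = mono K u - mono K v

/-- `x^w` is an indispensable monomial of `I_L`: every binomial generating set of `I_L`
contains a binomial one of whose monomials is `x^w`. -/
def IsIndispMonomial {m : ℕ} (L : AddSubgroup (Fin m → ℤ)) (w : Fin m → ℕ) : Prop :=
  ∀ B : Set (MvPolynomial (Fin m) K), (∀ f ∈ B, IsBinomial K f) →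
    Ideal.span B = latticeIdeal K L →
    ∃ f ∈ B, ∃ v : Fin m → ℕ, f = mono K w - mono K v ∨ f = mono K v - mono K w

/-- The set `T` of supports of indispensable monomials of `I_L`. -/
def Tsupp {m : ℕ} (L : AddSubgroup (Fin m → ℤ)) : Set (Set (Fin m)) :=
  {E | ∃ w : Fin m → ℕ, IsIndispMonomial K L w ∧ E = suppN w}

/-- `T_min`, the set of minimal elements of `T` with respect to inclusion. -/
def Tmin {m : ℕ} (L : AddSubgroup (Fin m → ℤ)) : Set (Set (Fin m)) :=
  {E ∈ Tsupp K L | ∀ E' ∈ Tsupp K L, E' ⊆ E → E' = E}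

/-- The saturation `Sat(L)` of the lattice `L`. -/
def satL {m : ℕ} (L : AddSubgroup (Fin m → ℤ)) : Set (Fin m → ℤ) :=
  {u | ∃ d : ℤ, d ≠ 0 ∧ d • u ∈ L}

/-- A circuit of `Sat(L)`: a nonzero element of `Sat(L)` of minimal support
whose coordinates are relatively prime. -/
def IsCircuit {m : ℕ} (L : AddSubgroup (Fin m → ℤ)) (u : Fin m → ℤ) : Prop :=
  u ≠ 0 ∧ u ∈ satL L ∧
    (∀ v ∈ satL L, v ≠ 0 → suppZ v ⊆ suppZ u → suppZ v = suppZ u) ∧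
    Finset.univ.gcd (fun i => (u i).natAbs) = 1

open MvPolynomial in
theorem mono_eq {m : ℕ} (w : Fin m → ℕ) :
    mono K w = monomial (Finsupp.equivFunOnFinite.symm w) (1 : K) := by
  rw [mono, monomial_eq, Finsupp.prod_fintype]
  · simp
  · simp

theorem mono_add {m : ℕ} (v w : Fin m → ℕ) : mono K (v + w) = mono K v * mono K w := by
  simp [mono, pow_add, Finset.prod_mul_distrib]

theorem mono_inj {m : ℕ} {v w : Fin m → ℕ} (h : mono K v = mono K w) : v = w := by
  rw [mono_eq, mono_eq] at h
  have := MvPolynomial.monomial_left_injective (one_ne_zero (α := K)) h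
  simpa using this

/-- integer cast of a vector -/
def cstZ {m : ℕ} (w : Fin m → ℕ) : Fin m → ℤ := fun i => (w i : ℤ)

theorem cstZ_add {m : ℕ} (v w : Fin m → ℕ) : cstZ (v + w) = cstZ v + cstZ w := by
  ext i; simp [cstZ]

theorem cstZ_pos_neg {m : ℕ} (u : Fin m → ℤ) : cstZ (intPos u) - cstZ (intNeg u) = u := by
  ext i; simp only [cstZ, intPos, intNeg, Pi.sub_apply]; omega

theorem mem_lattice_of_mem {m : ℕ} (L : AddSubgroup (Fin m → ℤ)) (p q : Fin m → ℕ)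
    (h : mono K p - mono K q ∈ latticeIdeal K L) : cstZ p - cstZ q ∈ L := by
  let φ : MvPolynomial (Fin m) K →ₐ[K] AddMonoidAlgebra K ((Fin m → ℤ) ⧸ L) :=
    MvPolynomial.aeval (fun i => AddMonoidAlgebra.single
      (QuotientAddGroup.mk (Pi.single i (1 : ℤ))) (1 : K))
  have hφ : ∀ w : Fin m → ℕ, φ (mono K w) =
      AddMonoidAlgebra.single (QuotientAddGroup.mk (cstZ w)) (1 : K) := by
    intro w
    have key : ∀ s : Finset (Fin m), ∏ i ∈ s, (AddMonoidAlgebra.single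
        ((QuotientAddGroup.mk (Pi.single i (1 : ℤ))) : (Fin m → ℤ) ⧸ L) (1 : K)) ^ w i
        = AddMonoidAlgebra.single (∑ i ∈ s, w i • (QuotientAddGroup.mk (Pi.single i (1 : ℤ)))) 1 := by
      intro s
      induction s using Finset.induction_on with
      | empty => simp [AddMonoidAlgebra.one_def]
      | insert a s ha ih =>
        rw [Finset.prod_insert ha, Finset.sum_insert ha, ih, AddMonoidAlgebra.single_pow,
          AddMonoidAlgebra.single_mul_single]
        simp
    simp only [mono, map_prod, map_pow, φ, MvPolynomial.aeval_X]
    rw [key]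
    congr 1
    have : cstZ w = ∑ i, w i • (Pi.single i (1 : ℤ) : Fin m → ℤ) := by
      ext j
      simp [cstZ, Finset.sum_apply, Pi.single_apply]
    rw [this]
    exact (map_sum (QuotientAddGroup.mk' L) _ _).symm
  have hker : latticeIdeal K L ≤ RingHom.ker φ.toRingHom := by
    rw [latticeIdeal, Ideal.span_le]
    rintro f ⟨u, hu, rfl⟩
    have : φ (mono K (intPos u) - mono K (intNeg u)) = 0 := by
      rw [map_sub, hφ, hφ, sub_eq_zero]
      congr 1
      rw [QuotientAddGroup.eq_iff_sub_mem, cstZ_pos_neg]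
      exact hu
    exact this
  have h2 : φ (mono K p - mono K q) = 0 := hker h
  rw [map_sub, hφ, hφ, sub_eq_zero] at h2
  have h3 := AddMonoidAlgebra.single_left_injective (one_ne_zero (α := K)) h2
  rwa [QuotientAddGroup.eq_iff_sub_mem] at h3

theorem mem_of_mem_lattice {m : ℕ} (L : AddSubgroup (Fin m → ℤ)) (p q : Fin m → ℕ)
    (h : cstZ p - cstZ q ∈ L) : mono K p - mono K q ∈ latticeIdeal K L := by
  set u := cstZ p - cstZ q with hu
  let r : Fin m → ℕ := fun i => min (p i) (q i)
  have h1 : p = r + intPos u := by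
    ext i; simp only [r, hu, intPos, cstZ, Pi.add_apply, Pi.sub_apply]; omega
  have h2 : q = r + intNeg u := by
    ext i; simp only [r, hu, intNeg, cstZ, Pi.add_apply, Pi.sub_apply]; omega
  have : mono K p - mono K q = mono K r * (mono K (intPos u) - mono K (intNeg u)) := by
    rw [mul_sub, ← mono_add, ← mono_add, ← h1, ← h2]
  rw [this]
  exact Ideal.mul_mem_left _ _ (Ideal.subset_span ⟨u, h, rfl⟩)

/-- exponents of the monomial ideal attached to the lattice -/
def MSet {m : ℕ} (L : AddSubgroup (Fin m → ℤ)) (w : Fin m → ℕ) : Prop :=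
  ∃ v, v ≠ w ∧ cstZ w - cstZ v ∈ L

theorem span_support {m : ℕ} (B : Set (MvPolynomial (Fin m) K)) (f : MvPolynomial (Fin m) K)
    (hf : f ∈ Ideal.span B) : ∀ d ∈ f.support, ∃ b ∈ B, ∃ p ∈ b.support, p ≤ d := by
  classical
  induction hf using Submodule.span_induction with
  | mem x hx => exact fun d hd => ⟨x, hx, d, hd, le_rfl⟩
  | zero => simp
  | add x y _ _ hx hy =>
    intro d hd
    rcases Finset.mem_union.1 (MvPolynomial.support_add hd) with h | h
    · exact hx d h
    · exact hy d h
  | smul a x _ hx =>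
    intro d hd
    rw [smul_eq_mul] at hd
    obtain ⟨e, he, g, hg, rfl⟩ := Finset.mem_add.1 (MvPolynomial.support_mul _ _ hd)
    obtain ⟨b, hb, p, hp, hpg⟩ := hx g hg
    exact ⟨b, hb, p, hp, hpg.trans le_add_self⟩

theorem indisp_of_minimal {m : ℕ} (L : AddSubgroup (Fin m → ℤ)) (w : Fin m → ℕ)
    (hw : Minimal (MSet L) w) : IsIndispMonomial K L w := by
  classical
  intro B hB hspan
  obtain ⟨v, hvw, hv⟩ := hw.1
  have hmem := mem_of_mem_lattice K L w v hv
  rw [← hspan] at hmem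
  obtain ⟨b, hb, p, hp, hpw⟩ := span_support K B _ hmem (Finsupp.equivFunOnFinite.symm w) (by
    rw [MvPolynomial.mem_support_iff, mono_eq, mono_eq, MvPolynomial.coeff_sub,
      MvPolynomial.coeff_monomial, MvPolynomial.coeff_monomial]
    simp [hvw])
  obtain ⟨a, c, rfl⟩ := hB b hb
  have hac : a ≠ c := by
    rintro rfl
    simp at hp
  have hL := mem_lattice_of_mem K L a c (hspan ▸ Ideal.subset_span hb)
  have hpw' : (p : Fin m → ℕ) ≤ w := fun i => hpw i
  have hcase : (p : Fin m → ℕ) = a ∨ (p : Fin m → ℕ) = c := by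
    by_contra hcon
    push Not at hcon
    rw [MvPolynomial.mem_support_iff, mono_eq, mono_eq, MvPolynomial.coeff_sub,
      MvPolynomial.coeff_monomial, MvPolynomial.coeff_monomial, if_neg, if_neg] at hp
    · simp at hp
    · rintro rfl; simp at hcon
    · rintro rfl; simp at hcon
  rcases hcase with h | h
  · have : a = w := by
      rw [h] at hpw'
      exact hw.eq_of_le ⟨c, hac.symm, hL⟩ hpw'
    subst this
    exact ⟨_, hb, c, Or.inl rfl⟩
  · have : c = w := by
      rw [h] at hpw'
      exact hw.eq_of_le ⟨a, hac, by simpa using L.neg_mem hL⟩ hpw'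
    subst this
    exact ⟨_, hb, a, Or.inr rfl⟩

theorem minimal_of_indisp {m : ℕ} (L : AddSubgroup (Fin m → ℤ))
    (hLpos : ∀ u ∈ L, (∀ i, 0 ≤ u i) → u = 0) (w : Fin m → ℕ)
    (hw : IsIndispMonomial K L w) : Minimal (MSet L) w := by
  classical
  by_contra hmin
  let B : Set (MvPolynomial (Fin m) K) :=
    {f | ∃ a c, a ≠ w ∧ c ≠ w ∧ a ≠ c ∧ cstZ a - cstZ c ∈ L ∧ f = mono K a - mono K c}
  have hin : ∀ a c, a ≠ w → c ≠ w → cstZ a - cstZ c ∈ L →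
      mono K a - mono K c ∈ Ideal.span B := by
    intro a c ha hc h
    by_cases hac : a = c
    · subst hac; simp
    · exact Ideal.subset_span ⟨a, c, ha, hc, hac, h, rfl⟩
  have hinw : ∀ c, c ≠ w → cstZ w - cstZ c ∈ L → mono K w - mono K c ∈ Ideal.span B := by
    intro c hc h
    have hMw : MSet L w := ⟨c, hc, h⟩
    have : ∃ p, MSet L p ∧ p < w := by
      by_contra hcon
      push Not at hcon
      refine hmin ⟨hMw, fun y hy hyw => ?_⟩
      rcases hyw.eq_or_lt with e | e
      · exact e.ge
      · exact absurd e (hcon y hy)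
    obtain ⟨p, ⟨q, hqp, hq⟩, hpw⟩ := this
    have hqw : q ≠ w := by
      rintro rfl
      have h0 := hLpos (cstZ q - cstZ p) (by simpa using L.neg_mem hq) (fun i => by
        have : p i ≤ q i := hpw.le i
        simp only [cstZ, Pi.sub_apply]; omega)
      apply hqp
      ext i
      have := congrFun h0 i
      simp only [cstZ, Pi.sub_apply, Pi.zero_apply] at this
      omega
    obtain ⟨r, rfl⟩ := exists_add_of_le hpw.le
    have e : mono K (p + r) - mono K c =
        mono K r * (mono K p - mono K q) + (mono K (q + r) - mono K c) := by
      rw [mono_add, mono_add]; ring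
    rw [e]
    refine Ideal.add_mem _ (Ideal.mul_mem_left _ _ (hin p q hpw.ne hqw hq)) (hin _ _ ?_ hc ?_)
    · simpa using hqp
    · have := L.sub_mem h hq
      rw [cstZ_add] at this ⊢
      convert this using 1
      abel
  obtain ⟨f, ⟨a, c, ha, hc, hac, h, rfl⟩, v, hv⟩ := hw B (by
    rintro f ⟨a, c, -, -, -, -, rfl⟩
    exact ⟨a, c, rfl⟩) (by
    apply le_antisymm
    · rw [Ideal.span_le]
      rintro f ⟨a, c, -, -, -, h, rfl⟩
      exact mem_of_mem_lattice K L a c h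
    · rw [latticeIdeal, Ideal.span_le]
      rintro f ⟨u, hu, rfl⟩
      have hu' := hu
      rw [← cstZ_pos_neg u] at hu'
      generalize intPos u = a at hu'
      generalize intNeg u = c at hu'
      by_cases ha : a = w
      · by_cases hc : c = w
        · subst ha; subst hc; simp
        · subst ha; exact hinw c hc hu'
      · by_cases hc : c = w
        · subst hc
          have := hinw a ha (by simpa using L.neg_mem hu')
          simpa using (Ideal.span B).neg_mem this
        · exact hin a c ha hc hu')
  have hl : MvPolynomial.coeff (Finsupp.equivFunOnFinite.symm w) (mono K a - mono K c) = 0 := by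
    simp [mono_eq, MvPolynomial.coeff_monomial, ha, hc]
  have hvw : v = w := by
    by_contra hne
    rcases hv with hv | hv <;> rw [hv] at hl <;>
      simp [mono_eq, MvPolynomial.coeff_monomial, hne] at hl
  subst hvw
  simp only [sub_self, or_self, sub_eq_zero] at hv
  exact hac (mono_inj K hv)

theorem tmin_char {m : ℕ} (L : AddSubgroup (Fin m → ℤ))
    (hLpos : ∀ u ∈ L, (∀ i, 0 ≤ u i) → u = 0)
    (E : Set (Fin m)) (hE : E ∈ Tmin K L) :
    (∃ u ∈ L, u ≠ 0 ∧ suppN (intPos u) = E) ∧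
    (∀ u ∈ L, u ≠ 0 → suppN (intPos u) ⊆ E → suppN (intPos u) = E) := by
  have h2 : ∀ u ∈ L, u ≠ 0 → suppN (intPos u) ⊆ E → suppN (intPos u) = E := by
    intro u hu hu0 hs
    have hM : MSet L (intPos u) := ⟨intNeg u, by
      intro h
      apply hu0
      rw [← cstZ_pos_neg u, h, sub_self], by rwa [cstZ_pos_neg]⟩
    obtain ⟨w, hwle, hw⟩ := exists_minimal_le_of_wellFoundedLT _ _ hM
    have hsw : suppN w ⊆ suppN (intPos u) := by
      intro i hi
      have : w i ≤ intPos u i := hwle i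
      simp only [suppN, Set.mem_setOf_eq] at hi ⊢
      omega
    have := hE.2 (suppN w) ⟨w, indisp_of_minimal K L w hw, rfl⟩ (hsw.trans hs)
    exact hs.antisymm (this ▸ hsw)
  refine ⟨?_, h2⟩
  obtain ⟨w, hw, rfl⟩ := hE.1
  obtain ⟨v, hvw, hv⟩ := (minimal_of_indisp K L hLpos w hw).1
  have h0 : cstZ w - cstZ v ≠ 0 := by
    intro h
    apply hvw
    ext i
    have := congrFun h i
    simp only [cstZ, Pi.sub_apply, Pi.zero_apply] at this
    omega
  refine ⟨_, hv, h0, h2 _ hv h0 ?_⟩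
  intro i hi
  simp only [suppN, Set.mem_setOf_eq, intPos, cstZ, Pi.sub_apply] at hi ⊢
  omega

theorem suppN_smul {m : ℕ} (d : ℤ) (hd : 0 < d) (u : Fin m → ℤ) :
    suppN (intPos (d • u)) = suppN (intPos u) := by
  ext i
  have h : ∀ z : ℤ, z.toNat ≠ 0 ↔ 0 < z := fun z => by omega
  simp only [suppN, Set.mem_setOf_eq, intPos, Pi.smul_apply, smul_eq_mul, h]
  exact mul_pos_iff_of_pos_left hd

theorem sat_pos {m : ℕ} (L : AddSubgroup (Fin m → ℤ)) (u : Fin m → ℤ) (hu : u ∈ satL L) :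
    ∃ d : ℤ, 0 < d ∧ d • u ∈ L := by
  obtain ⟨d, hd, h⟩ := hu
  rcases lt_or_gt_of_ne hd with h' | h'
  · exact ⟨-d, by omega, by simpa using L.neg_mem h⟩
  · exact ⟨d, h', h⟩

theorem elim_step {m : ℕ} (L : AddSubgroup (Fin m → ℤ)) (E : Set (Fin m)) (u v : Fin m → ℤ)
    (hu : u ∈ L) (hv : v ∈ L) (huE : suppN (intPos u) ⊆ E) (hv0 : v ≠ 0)
    (hsub : suppZ v ⊂ suppZ u) :
    ∃ u' ∈ L, u' ≠ 0 ∧ suppN (intPos u') ⊆ E ∧ suppZ u' ⊂ suppZ u := by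
  classical
  have hne : (Finset.univ.filter (fun i => v i ≠ 0)).Nonempty := by
    obtain ⟨i, hi⟩ := Function.ne_iff.1 hv0
    exact ⟨i, by simpa using hi⟩
  obtain ⟨i, hi, hmin⟩ := Finset.exists_min_image _ (fun i => (|u i| : ℚ) / |v i|) hne
  simp only [Finset.mem_filter, Finset.mem_univ, true_and] at hi hmin
  have hmin' : ∀ j, |u i| * |v j| ≤ |u j| * |v i| := by
    intro j
    by_cases hj : v j = 0
    · simp only [hj, abs_zero, mul_zero]; positivity
    · have := hmin j hj
      rw [div_le_div_iff₀ (by positivity) (by positivity)] at this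
      exact_mod_cast this
  obtain ⟨-, j₀, hj₀⟩ := Set.ssubset_iff_of_subset hsub.subset |>.1 hsub |> fun ⟨j, h1, h2⟩ =>
    (⟨trivial, j, h1, h2⟩ : True ∧ ∃ j, j ∈ suppZ u ∧ j ∉ suppZ v)
  simp only [suppZ, Set.mem_setOf_eq, not_not] at hj₀
  have hui : u i ≠ 0 := hsub.subset hi
  have hsup : ∀ j, u j = 0 → v j = 0 := by
    intro j hj
    by_contra h
    exact hsub.subset (show j ∈ suppZ v from h) hj
  refine ⟨|v i| • u - ((v i).sign * u i) • v, L.sub_mem (L.zsmul_mem hu _) (L.zsmul_mem hv _),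
    ?_, ?_, ?_⟩
  · intro h
    have := congrFun h j₀
    simp [hj₀.2, hj₀.1, hi] at this
  · intro j hj
    by_contra hjE
    have huj : u j ≤ 0 := by
      by_contra h
      exact hjE (huE (show (u j).toNat ≠ 0 by omega))
    have h1 : 0 < |v i| * u j - (v i).sign * u i * v j := by
      simp only [suppN, Set.mem_setOf_eq, intPos, Pi.sub_apply, Pi.smul_apply, smul_eq_mul] at hj
      omega
    have h2 := hmin' j
    have h3 : -((v i).sign * u i * v j) ≤ |u i| * |v j| := by
      refine (neg_le_abs _).trans (le_of_eq ?_)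
      rw [abs_mul, abs_mul, Int.abs_sign_of_ne_zero hi, one_mul]
    rw [abs_of_nonpos huj] at h2
    nlinarith
  · refine (Set.ssubset_iff_of_subset ?_).2 ⟨i, hui, ?_⟩
    · intro j hj hj0
      apply hj
      simp [hj0, hsup j hj0]
    · simp only [suppZ, Set.mem_setOf_eq, not_not, Pi.sub_apply, Pi.smul_apply, smul_eq_mul]
      have := Int.sign_mul_self_eq_abs (v i)
      rw [← this]; ring

theorem stmt0 {m : ℕ} (L : AddSubgroup (Fin m → ℤ))
    (hL0 : L ≠ ⊥) (hLpos : ∀ u ∈ L, (∀ i, 0 ≤ u i) → u = 0)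
    (E : Set (Fin m)) (hE : E ∈ Tmin K L) :
    (¬ ∃ u : Fin m → ℤ, IsCircuit L u ∧
        (suppN (intPos u) ⊂ E ∨ suppN (intNeg u) ⊂ E)) ∧
    (∃ u : Fin m → ℤ, IsCircuit L u ∧
        (suppN (intPos u) = E ∨ suppN (intNeg u) = E)) := by
  classical
  obtain ⟨⟨u₀, hu₀, hu₀0, hu₀E⟩, hmin⟩ := tmin_char K L hLpos E hE
  constructor
  · rintro ⟨u, ⟨hu0, hus, -, -⟩, h⟩
    obtain ⟨d, hd, hdu⟩ := sat_pos L u hus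
    rcases h with h | h
    · have := hmin (d • u) hdu (smul_ne_zero hd.ne' hu0) (by rw [suppN_smul d hd]; exact h.subset)
      rw [suppN_smul d hd] at this
      exact h.ne this
    · have e : intNeg u = intPos (-u) := rfl
      rw [e] at h
      have := hmin (d • (-u)) (by simpa using L.neg_mem hdu)
        (smul_ne_zero hd.ne' (neg_ne_zero.2 hu0)) (by rw [suppN_smul d hd]; exact h.subset)
      rw [suppN_smul d hd] at this
      exact h.ne this
  · let P : ℕ → Prop := fun n =>
      ∃ u ∈ L, u ≠ 0 ∧ suppN (intPos u) ⊆ E ∧ (suppZ u).ncard = n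
    have hP : ∃ n, P n := ⟨_, u₀, hu₀, hu₀0, hu₀E.subset, rfl⟩
    obtain ⟨u, hu, hu0, huE, hcard⟩ := Nat.find_spec hP
    let g : ℕ := Finset.univ.gcd (fun i => (u i).natAbs)
    obtain ⟨k, hk⟩ := Function.ne_iff.1 hu0
    have hk' : (u k).natAbs ≠ 0 := by simpa using hk
    obtain ⟨f, hf, hf1⟩ := Finset.extract_gcd (fun i => (u i).natAbs)
      (⟨k, Finset.mem_univ k⟩ : (Finset.univ : Finset (Fin m)).Nonempty)
    have hg : 0 < g := by
      rw [Nat.pos_iff_ne_zero]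
      intro h
      have := hf k (Finset.mem_univ k)
      change _ = g * _ at this
      rw [h, zero_mul] at this
      exact hk' this
    let c : Fin m → ℤ := fun i => (u i).sign * f i
    have hgc : (g : ℤ) • c = u := by
      ext i
      have := hf i (Finset.mem_univ i)
      change _ = g * _ at this
      have h2 : ((u i).natAbs : ℤ) = g * f i := by exact_mod_cast this
      have h3 := Int.sign_mul_natAbs (u i)
      rw [h2] at h3
      simp only [Pi.smul_apply, smul_eq_mul, c]
      linarith
    have hgZ : (0 : ℤ) < g := by exact_mod_cast hg
    have hsc : suppZ c = suppZ u := by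
      ext i
      rw [← hgc]
      simp [suppZ, hg.ne']
    refine ⟨c, ⟨?_, ⟨g, hgZ.ne', by rwa [hgc]⟩, ?_, ?_⟩, Or.inl ?_⟩
    · intro h
      apply hu0
      rw [← hgc, h, smul_zero]
    · intro v hv hv0 hvs
      obtain ⟨d, hd, hdv⟩ := sat_pos L v hv
      by_contra hne
      have hsd : suppZ (d • v) = suppZ v := by
        ext i; simp [suppZ, hd.ne']
      have hss : suppZ (d • v) ⊂ suppZ u := by
        rw [hsd, ← hsc]
        exact hvs.ssubset_of_ne hne
      obtain ⟨u', h1, h2, h3, h4⟩ := elim_step L E u (d • v) hu hdv huE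
        (smul_ne_zero hd.ne' hv0) hss
      have hlt := Set.ncard_lt_ncard h4 (Set.toFinite _)
      rw [hcard] at hlt
      exact Nat.find_min hP hlt ⟨u', h1, h2, h3, rfl⟩
    · rw [← hf1]
      apply Finset.gcd_congr rfl
      intro i _
      by_cases h : u i = 0
      · have := hf i (Finset.mem_univ i)
        change _ = g * _ at this
        simp [h, hg.ne'] at this
        simp [c, this]
      · simp [c, Int.natAbs_mul, Int.natAbs_sign, h]
    · rw [← suppN_smul g hgZ c, hgc]
      exact hmin u hu hu0 huE
end

section
/- Let K be any field and L ⊆ ℤ^m a nonzero positive lattice. If rad(I_L) = rad((F_1,…,F_s)) for some polynomials F_1,…,F_s ∈ I_L, then for every E ∈ T_min there exist an index j ∈ {1,…,s} and a monomial M appearing with nonzero coefficient in F_j such that supp(M) = E. -/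
open MvPolynomial

variable (K : Type*) [Field K]

open Classical in
theorem coeff_mono {m : ℕ} (w : Fin m → ℕ) (c : Fin m →₀ ℕ) :
    coeff c (mono K w) = if w = ⇑c then 1 else 0 := by
  have h : mono K w = monomial (Finsupp.equivFunOnFinite.symm w) (1 : K) := by
    rw [monomial_eq, C_1, one_mul, Finsupp.prod_fintype _ _ (fun i => pow_zero _)]
    rfl
  rw [h, coeff_monomial]
  have : (Finsupp.equivFunOnFinite.symm w = c) ↔ (w = ⇑c) := by
    rw [Equiv.symm_apply_eq]; rfl
  simp only [this]

theorem coeff_span_zero {m : ℕ} (B : Set (MvPolynomial (Fin m) K)) (a : Fin m →₀ ℕ)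
    (h : ∀ f ∈ B, ∀ c ≤ a, coeff c f = 0) (g : MvPolynomial (Fin m) K)
    (hg : g ∈ Ideal.span B) : coeff a g = 0 := by
  classical
  suffices H : ∀ c ≤ a, coeff c g = 0 from H a le_rfl
  induction hg using Submodule.span_induction with
  | mem x hx => exact h x hx
  | zero => intro c _; simp
  | add x y _ _ hx hy => intro c hc; rw [coeff_add, hx c hc, hy c hc, add_zero]
  | smul p x _ hx =>
    intro c hc
    rw [smul_eq_mul, coeff_mul]
    refine Finset.sum_eq_zero fun q hq => ?_
    rw [Finset.HasAntidiagonal.mem_antidiagonal] at hq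
    rw [hx q.2 (le_trans (hq ▸ le_add_self) hc), mul_zero]

theorem intPos_neg {m : ℕ} (u : Fin m → ℤ) : intPos (-u) = intNeg u := rfl

theorem intPos_ne_intNeg {m : ℕ} (u : Fin m → ℤ) (hu : u ≠ 0) : intPos u ≠ intNeg u := by
  intro h
  apply hu
  funext i
  have := congrFun h i
  simp only [intPos, intNeg] at this
  simp only [Pi.zero_apply]
  omega

theorem exists_le_of_coeff {m : ℕ} (L : AddSubgroup (Fin m → ℤ)) (a : Fin m →₀ ℕ)
    (g : MvPolynomial (Fin m) K) (hg : g ∈ latticeIdeal K L) (ha : coeff a g ≠ 0) :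
    ∃ u ∈ L, u ≠ 0 ∧ intPos u ≤ ⇑a := by
  classical
  by_contra hcon
  push Not at hcon
  apply ha
  refine coeff_span_zero K _ a ?_ g hg
  rintro f ⟨u, hu, rfl⟩ c hc
  by_cases h0 : u = 0
  · subst h0
    have : intNeg (0 : Fin m → ℤ) = intPos 0 := by funext i; simp [intPos, intNeg]
    rw [this, sub_self, coeff_zero]
  · rw [coeff_sub, coeff_mono, coeff_mono, if_neg, if_neg, sub_zero]
    · intro h
      refine hcon (-u) (neg_mem hu) (neg_ne_zero.2 h0) ?_
      rw [intPos_neg, h]; exact hc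
    · intro h
      refine hcon u hu h0 ?_
      rw [h]; exact hc

theorem exists_indisp {m : ℕ} (L : AddSubgroup (Fin m → ℤ)) (u : Fin m → ℤ)
    (hu : u ∈ L) (h0 : u ≠ 0) :
    ∃ w : Fin m → ℕ, IsIndispMonomial K L w ∧ w ≤ intPos u := by
  classical
  obtain ⟨w, hwle, hwmin⟩ := exists_minimal_le_of_wellFoundedLT
    (fun a : Fin m → ℕ => ∃ u ∈ L, u ≠ 0 ∧ intPos u = a) (intPos u) ⟨u, hu, h0, rfl⟩
  refine ⟨w, ?_, hwle⟩
  obtain ⟨⟨u', hu', h0', hw⟩, hmin⟩ := hwmin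
  intro B hB hspan
  by_contra hcon
  push Not at hcon
  have hmem : mono K (intPos u') - mono K (intNeg u') ∈ Ideal.span B := by
    rw [hspan]; exact Ideal.subset_span ⟨u', hu', rfl⟩
  have hz := coeff_span_zero K B (Finsupp.equivFunOnFinite.symm w) ?_ _ hmem
  · rw [coeff_sub, coeff_mono, coeff_mono] at hz
    have e : ⇑(Finsupp.equivFunOnFinite.symm w) = w := rfl
    rw [e, if_pos hw, if_neg] at hz
    · simp at hz
    · intro h; exact intPos_ne_intNeg u' h0' (hw.trans h.symm)
  · intro f hf c hc
    by_contra hne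
    have hfI : f ∈ latticeIdeal K L := hspan ▸ Ideal.subset_span hf
    obtain ⟨t, ht, ht0, htc⟩ := exists_le_of_coeff K L c f hfI hne
    have hcw : ⇑c ≤ w := hc
    have h1 : w ≤ intPos t := hmin ⟨t, ht, ht0, rfl⟩ (htc.trans hcw)
    have hceq : w = ⇑c := le_antisymm (h1.trans htc) hcw
    obtain ⟨p, q, hpq⟩ := hB f hf
    have h2 := hcon f hf
    by_cases hp : p = w
    · exact (h2 q).1 (hp ▸ hpq)
    by_cases hq : q = w
    · exact (h2 p).2 (hq ▸ hpq)
    apply hne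
    rw [hpq, coeff_sub, coeff_mono, coeff_mono, ← hceq, if_neg hp, if_neg hq, sub_zero]

theorem indisp_exists {m : ℕ} (L : AddSubgroup (Fin m → ℤ)) (w : Fin m → ℕ)
    (hw : IsIndispMonomial K L w) :
    ∃ v : Fin m → ℕ, v ≠ w ∧ mono K w - mono K v ∈ latticeIdeal K L := by
  classical
  obtain ⟨f, ⟨⟨u, hu, hf⟩, hf0⟩, v, hv⟩ := hw
    ({f | ∃ u ∈ L, f = mono K (intPos u) - mono K (intNeg u)} \ {0})
    (by rintro f ⟨⟨u, -, rfl⟩, -⟩; exact ⟨_, _, rfl⟩)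
    (Submodule.span_sdiff_singleton_zero)
  have hfI : f ∈ latticeIdeal K L := Ideal.subset_span ⟨u, hu, hf⟩
  refine ⟨v, ?_, ?_⟩
  · rintro rfl
    apply hf0
    rcases hv with rfl | rfl <;> simp
  · rcases hv with rfl | rfl
    · exact hfI
    · rw [← neg_sub]; exact neg_mem hfI

theorem stmt2 {m : ℕ} (L : AddSubgroup (Fin m → ℤ))
    (hL0 : L ≠ ⊥) (hLpos : ∀ u ∈ L, (∀ i, 0 ≤ u i) → u = 0)
    (s : ℕ) (F : Fin s → MvPolynomial (Fin m) K)
    (hF : ∀ j, F j ∈ latticeIdeal K L)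
    (hrad : (latticeIdeal K L).radical = (Ideal.span (Set.range F)).radical)
    (E : Set (Fin m)) (hE : E ∈ Tmin K L) :
    ∃ j : Fin s, ∃ w : (Fin m) →₀ ℕ,
      MvPolynomial.coeff w (F j) ≠ 0 ∧ {i | w i ≠ 0} = E := by
  classical
  obtain ⟨⟨w, hw, rfl⟩, hmin⟩ := hE
  by_contra hcon
  push Not at hcon
  obtain ⟨v, hvw, hv⟩ := indisp_exists K L w hw
  let φ : MvPolynomial (Fin m) K →ₐ[K] MvPolynomial (Fin m) K :=
    aeval (fun i => if i ∈ suppN w then X i else 0)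
  have hφF : ∀ j, φ (F j) = 0 := by
    intro j
    rw [(F j).as_sum, map_sum]
    refine Finset.sum_eq_zero fun a ha => ?_
    have hne : coeff a (F j) ≠ 0 := mem_support_iff.1 ha
    have hex : ∃ i, a i ≠ 0 ∧ i ∉ suppN w := by
      by_contra hall
      push Not at hall
      obtain ⟨u, hu, h0, hua⟩ := exists_le_of_coeff K L a (F j) (hF j) hne
      obtain ⟨w', hw', hle⟩ := exists_indisp K L u hu h0
      have hsub : suppN w' ⊆ {i | a i ≠ 0} := by
        intro i hi
        have h1 : w' i ≤ a i := (hle.trans hua) i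
        have h2 : w' i ≠ 0 := hi
        show a i ≠ 0
        omega
      have heq := hmin (suppN w') ⟨w', hw', rfl⟩ (hsub.trans hall)
      exact hcon j a hne (Set.Subset.antisymm hall (heq ▸ hsub))
    obtain ⟨i, hi, hiw⟩ := hex
    simp only [φ, aeval_monomial]
    rw [Finsupp.prod, Finset.prod_eq_zero (Finsupp.mem_support_iff.2 hi), mul_zero]
    rw [if_neg hiw, zero_pow hi]
  have hle : Ideal.span (Set.range F) ≤ RingHom.ker φ.toRingHom := by
    rw [Ideal.span_le]
    rintro _ ⟨j, rfl⟩
    exact hφF j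
  have hrd : mono K w - mono K v ∈ (Ideal.span (Set.range F)).radical :=
    hrad ▸ Ideal.le_radical hv
  obtain ⟨n, hn⟩ := hrd
  have h1 : φ ((mono K w - mono K v) ^ n) = 0 := hle hn
  rw [map_pow] at h1
  have h2 : φ (mono K w - mono K v) = 0 := eq_zero_of_pow_eq_zero h1
  have hφm : ∀ t : Fin m → ℕ, φ (mono K t) =
      ∏ i, (if i ∈ suppN w then X i else 0) ^ t i := by
    intro t
    simp [φ, mono, map_prod]
  have hgood : ∀ t : Fin m → ℕ, suppN t ⊆ suppN w → φ (mono K t) = mono K t := by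
    intro t ht
    rw [hφm, mono]
    refine Finset.prod_congr rfl fun i _ => ?_
    by_cases hi : i ∈ suppN w
    · rw [if_pos hi]
    · have : t i = 0 := by
        by_contra h
        exact hi (ht h)
      rw [this, pow_zero, pow_zero]
  rw [map_sub, hgood w subset_rfl] at h2
  have h3 := congrArg (coeff (Finsupp.equivFunOnFinite.symm w)) h2
  have e : ⇑(Finsupp.equivFunOnFinite.symm w) = w := rfl
  rw [coeff_sub, coeff_mono, e, if_pos rfl, coeff_zero] at h3
  by_cases hs : suppN v ⊆ suppN w
  · rw [hgood v hs, coeff_mono, e, if_neg hvw] at h3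
    simp at h3
  · obtain ⟨i, hi, hiw⟩ := Set.not_subset.1 hs
    have : φ (mono K v) = 0 := by
      rw [hφm, Finset.prod_eq_zero (Finset.mem_univ i)]
      rw [if_neg hiw, zero_pow hi]
    rw [this] at h3
    simp at h3
end

section
/- Let n ≥ 3 and let W_{n+1} be the wheel graph. Then the binomial arithmetical rank of the toric ideal I_{A_{W_{n+1}}} equals its minimal number of binomial generators: bar(I_{A_{W_{n+1}}}) = μ(I_{A_{W_{n+1}}}). -/
open MvPolynomial

/-- The `K`-algebra homomorphism `K[x_e : e ∈ E(G)] → K[t_v : v ∈ V(G)]`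
sending `x_e ↦ t_u t_w` for each edge `e = {u,w}`. -/
noncomputable def graphHom (K : Type*) [Field K] {V : Type*} (G : SimpleGraph V) :
    MvPolynomial G.edgeSet K →ₐ[K] MvPolynomial V K :=
  aeval (fun e : G.edgeSet =>
    Sym2.lift ⟨fun u w => X u * X w, fun u w => mul_comm _ _⟩ (e : Sym2 V))

/-- The toric ideal `I_{A_G}` of the graph `G`. -/
noncomputable def toricIdealGraph (K : Type*) [Field K] {V : Type*} (G : SimpleGraph V) :
    Ideal (MvPolynomial G.edgeSet K) :=
  RingHom.ker (graphHom K G).toRingHom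

/-- A binomial: a difference of two (monic) monomials. -/
def IsBinom {K : Type*} [Field K] {σ : Type*} (f : MvPolynomial σ K) : Prop :=
  ∃ u v : σ →₀ ℕ, f = monomial u 1 - monomial v 1

/-- `μ(I)`: the smallest cardinality of a binomial generating set of `I`. -/
noncomputable def muI {K : Type*} [Field K] {σ : Type*} (I : Ideal (MvPolynomial σ K)) : ℕ :=
  sInf {t | ∃ B : Finset (MvPolynomial σ K), B.card = t ∧
        (∀ f ∈ B, IsBinom f) ∧ Ideal.span (B : Set (MvPolynomial σ K)) = I}

/-- `bar(I)`: the smallest `s` such that there are binomials `B_1,…,B_s ∈ I`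
with `rad(I) = rad((B_1,…,B_s))`. -/
noncomputable def barI {K : Type*} [Field K] {σ : Type*} (I : Ideal (MvPolynomial σ K)) : ℕ :=
  sInf {s | ∃ B : Fin s → MvPolynomial σ K,
        (∀ j, IsBinom (B j) ∧ B j ∈ I) ∧
        I.radical = (Ideal.span (Set.range B)).radical}

/-- The wheel graph `W_{n+1}` on the vertex set `{0,…,n}`: the cycle
`0 — 1 — ⋯ — (n-1) — 0` together with the hub `n` joined to every cycle vertex. -/
def wheelGraph (n : ℕ) : SimpleGraph (Fin (n + 1)) :=
  SimpleGraph.fromRel (fun a b =>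
    (a.val < n ∧ b.val < n ∧ (a.val + 1) % n = b.val) ∨ (a.val < n ∧ b.val = n))

namespace Wheel

section general

variable {V : Type*} {G : SimpleGraph V}

/-- The vertex multidegree of an exponent vector. -/
noncomputable def edgeDeg (e : Sym2 V) : V →₀ ℕ :=
  Sym2.lift ⟨fun u w => Finsupp.single u 1 + Finsupp.single w 1, fun u w => add_comm _ _⟩ e

noncomputable def D : (G.edgeSet →₀ ℕ) →+ (V →₀ ℕ) :=
  Finsupp.liftAddHom (fun e : G.edgeSet =>
    multiplesHom (V →₀ ℕ) (edgeDeg (e : Sym2 V)))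

lemma D_single (e : G.edgeSet) (k : ℕ) :
    D (Finsupp.single e k) = k • edgeDeg (e : Sym2 V) := by
  simp [D]

lemma graphHom_X (K : Type*) [Field K] (e : G.edgeSet) :
    graphHom K G (X e) = monomial (edgeDeg (e : Sym2 V)) 1 := by
  obtain ⟨e, he⟩ := e
  induction e with
  | _ a b =>
    rw [graphHom, aeval_X]
    simp [edgeDeg, X, monomial_mul]

lemma graphHom_monomial (K : Type*) [Field K] (u : G.edgeSet →₀ ℕ) :
    graphHom K G (monomial u 1) = monomial (D u) 1 := by
  induction u using Finsupp.induction_linear with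
  | zero => simp
  | add f g hf hg =>
    have : (monomial (f + g) (1 : K)) = monomial f 1 * monomial g 1 := by simp [monomial_mul]
    rw [this, map_mul, hf, hg, map_add, monomial_mul, one_mul]
  | single e k =>
    have : (monomial (Finsupp.single e k) (1 : K)) = X e ^ k := by rw [X_pow_eq_monomial]
    rw [this, map_pow, graphHom_X, D_single, monomial_pow, one_pow]

lemma mem_toric (K : Type*) [Field K] (f : MvPolynomial G.edgeSet K) :
    f ∈ toricIdealGraph K G ↔ graphHom K G f = 0 := Iff.rfl

lemma binom_mem (K : Type*) [Field K] (u v : G.edgeSet →₀ ℕ) :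
    (monomial u 1 - monomial v 1 : MvPolynomial G.edgeSet K) ∈ toricIdealGraph K G ↔
      D u = D v := by
  rw [mem_toric, map_sub, graphHom_monomial, graphHom_monomial, sub_eq_zero]
  constructor
  · intro h
    exact monomial_left_injective one_ne_zero h
  · intro h; rw [h]

lemma toric_le (K : Type*) [Field K] (J : Ideal (MvPolynomial G.edgeSet K))
    (h : ∀ u v : G.edgeSet →₀ ℕ, D u = D v → monomial u 1 - monomial v 1 ∈ J) :
    toricIdealGraph K G ≤ J := by
  classical
  intro f hf
  rw [mem_toric] at hf
  let rep : (V →₀ ℕ) → (G.edgeSet →₀ ℕ) := Function.invFun D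
  let ψ : MvPolynomial V K →ₗ[K] MvPolynomial G.edgeSet K :=
    (basisMonomials V K).constr K (fun d => monomial (rep d) 1)
  have hψ : ∀ d, ψ (monomial d 1) = monomial (rep d) 1 := by
    intro d
    have := (basisMonomials V K).constr_basis K (fun d => monomial (rep d) (1 : K)) d
    simpa [ψ] using this
  have key : ∀ f : MvPolynomial G.edgeSet K, f - ψ (graphHom K G f) ∈ J := by
    intro f
    induction f using MvPolynomial.induction_on' with
    | monomial u a =>
      have h1 : monomial u a = a • (monomial u (1 : K)) := by simp [smul_monomial]
      rw [h1, map_smul, map_smul, ← smul_sub, graphHom_monomial, hψ, smul_eq_C_mul]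
      exact J.mul_mem_left _ (h _ _ (Function.invFun_eq ⟨u, rfl⟩).symm)
    | add p q hp hq =>
      rw [map_add, map_add, add_sub_add_comm]
      exact J.add_mem hp hq
  have := key f
  rwa [hf, map_zero, sub_zero] at this

open Classical in
lemma eval_ind (K : Type*) [Field K] {σ : Type*} (E : Finset σ) (u : σ →₀ ℕ) :
    eval (fun e => if e ∈ E then (1 : K) else 0) (monomial u 1) =
      if u.support ⊆ E then 1 else 0 := by
  rw [eval_monomial, one_mul, Finsupp.prod]
  split_ifs with h
  · apply Finset.prod_eq_one
    intro e he
    rw [if_pos (h he), one_pow]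
  · obtain ⟨e, he, hE⟩ := Finset.not_subset.1 h
    apply Finset.prod_eq_zero he
    rw [if_neg hE, zero_pow (Finsupp.mem_support_iff.1 he)]

lemma lower_bound (K : Type*) [Field K] {κ : Type*} [Fintype κ]
    (E : κ → Finset G.edgeSet) (hinj : Function.Injective E)
    (hmin : ∀ k, ∀ u v : G.edgeSet →₀ ℕ, D u = D v → u.support ⊆ E k → ¬ v.support ⊆ E k →
      E k ⊆ u.support)
    (hex : ∀ k, ∃ u v : G.edgeSet →₀ ℕ, D u = D v ∧ u.support ⊆ E k ∧ ¬ v.support ⊆ E k)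
    (s : ℕ) (B : Fin s → MvPolynomial G.edgeSet K)
    (hB : ∀ j, IsBinom (B j) ∧ B j ∈ toricIdealGraph K G)
    (hrad : (toricIdealGraph K G).radical = (Ideal.span (Set.range B)).radical) :
    Fintype.card κ ≤ 2 * s := by
  classical
  choose p q hpq using fun j => (hB j).1
  have hD : ∀ j, D (p j) = D (q j) := by
    intro j
    have := (hB j).2
    rw [hpq j] at this
    exact (binom_mem K _ _).1 this
  let side : Fin s × Bool → (G.edgeSet →₀ ℕ) := fun x => if x.2 then p x.1 else q x.1
  let other : Fin s × Bool → (G.edgeSet →₀ ℕ) := fun x => if x.2 then q x.1 else p x.1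
  have hDs : ∀ x, D (side x) = D (other x) := by
    rintro ⟨j, b⟩
    cases b
    · simpa [side, other] using (hD j).symm
    · simpa [side, other] using hD j
  have key : ∀ k, ∃ x, (side x).support ⊆ E k ∧ ¬ (other x).support ⊆ E k := by
    intro k
    by_contra hcon
    push Not at hcon
    let φ : MvPolynomial G.edgeSet K →+* K := eval (fun e => if e ∈ E k then (1 : K) else 0)
    have hφ : ∀ u, φ (monomial u 1) = if u.support ⊆ E k then 1 else 0 := by
      intro u
      convert eval_ind K (E k) u
    have h1 : Ideal.span (Set.range B) ≤ RingHom.ker φ := by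
      rw [Ideal.span_le]
      rintro _ ⟨j, rfl⟩
      rw [SetLike.mem_coe, RingHom.mem_ker, hpq j, map_sub, hφ, hφ]
      have a1 := hcon (j, true)
      have a2 := hcon (j, false)
      simp only [side, other, if_true, Bool.false_eq_true, if_false] at a1 a2
      have : (p j).support ⊆ E k ↔ (q j).support ⊆ E k := ⟨a1, a2⟩
      simp [this]
    have hp : (RingHom.ker φ).IsPrime := RingHom.ker_isPrime φ
    have h2 : toricIdealGraph K G ≤ RingHom.ker φ := by
      calc toricIdealGraph K G ≤ (toricIdealGraph K G).radical := Ideal.le_radical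
        _ = _ := hrad
        _ ≤ _ := hp.isRadical.radical_le_iff.2 h1
    obtain ⟨u, v, huv, hu, hv⟩ := hex k
    have h3 := h2 ((binom_mem K u v).2 huv)
    rw [RingHom.mem_ker, map_sub, hφ, hφ, if_pos hu, if_neg hv] at h3
    simp at h3
  choose F hF1 hF2 using key
  have hFi : Function.Injective F := by
    intro k k' h
    apply hinj
    have e1 := (hmin k _ _ (hDs _) (hF1 k) (hF2 k)).antisymm (hF1 k)
    have e2 := (hmin k' _ _ (hDs _) (hF1 k') (hF2 k')).antisymm (hF1 k')
    rw [e1, e2, h]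
  have := Fintype.card_le_of_injective F hFi
  simpa [mul_comm] using this

lemma main_abstract (K : Type*) [Field K] {ι κ : Type*} [Fintype ι] [Fintype κ]
    (g : ι → MvPolynomial G.edgeSet K) (hg : ∀ i, IsBinom (g i))
    (hspan : Ideal.span (Set.range g) = toricIdealGraph K G)
    (E : κ → Finset G.edgeSet) (hinj : Function.Injective E)
    (hmin : ∀ k, ∀ u v : G.edgeSet →₀ ℕ, D u = D v → u.support ⊆ E k → ¬ v.support ⊆ E k →
      E k ⊆ u.support)
    (hex : ∀ k, ∃ u v : G.edgeSet →₀ ℕ, D u = D v ∧ u.support ⊆ E k ∧ ¬ v.support ⊆ E k)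
    (hcard : 2 * Fintype.card ι ≤ Fintype.card κ + 1) :
    barI (toricIdealGraph K G) = muI (toricIdealGraph K G) := by
  classical
  set I := toricIdealGraph K G with hI
  have hmuset : (Finset.univ.image g).card ∈ {t | ∃ B : Finset (MvPolynomial G.edgeSet K),
      B.card = t ∧ (∀ f ∈ B, IsBinom f) ∧ Ideal.span (B : Set (MvPolynomial G.edgeSet K)) = I} := by
    refine ⟨_, rfl, ?_, ?_⟩
    · intro f hf
      obtain ⟨i, -, rfl⟩ := Finset.mem_image.1 hf
      exact hg i
    · simpa using hspan
  have hmu : muI I ≤ Fintype.card ι :=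
    (Nat.sInf_le hmuset).trans (Finset.card_image_le.trans (by simp))
  obtain ⟨B, hBc, hBb, hBs⟩ := Nat.sInf_mem ⟨_, hmuset⟩
  change B.card = muI I at hBc
  have hmemI : ∀ f ∈ B, f ∈ I := fun f hf => hBs ▸ Ideal.subset_span hf
  have hbarmem : muI I ∈ {s | ∃ B : Fin s → MvPolynomial G.edgeSet K,
        (∀ j, IsBinom (B j) ∧ B j ∈ I) ∧
        I.radical = (Ideal.span (Set.range B)).radical} := by
    let e := B.equivFinOfCardEq hBc
    have hr : Set.range (fun j => ((e.symm j : B) : MvPolynomial G.edgeSet K)) = B := by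
      rw [show (fun j => ((e.symm j : B) : MvPolynomial G.edgeSet K)) = Subtype.val ∘ e.symm from rfl,
        e.symm.surjective.range_comp]
      simp
    refine ⟨fun j => ((e.symm j : B) : MvPolynomial G.edgeSet K), ?_, ?_⟩
    · intro j
      exact ⟨hBb _ (e.symm j).2, hmemI _ (e.symm j).2⟩
    · rw [hr, hBs]
  have h1 : barI I ≤ muI I := Nat.sInf_le hbarmem
  obtain ⟨B', hB', hrad⟩ := Nat.sInf_mem ⟨_, hbarmem⟩
  have h2 := lower_bound K E hinj hmin hex _ B' hB' hrad
  change _ ≤ 2 * barI I at h2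
  omega

end general
end Wheel
namespace Wheel

section wheel

variable {n : ℕ} [NeZero n] [hn : Fact (3 ≤ n)]

/-- rim vertex -/
def vx (i : ZMod n) : Fin (n + 1) := ⟨i.val, (ZMod.val_lt i).trans (Nat.lt_succ_self n)⟩


lemma vx_inj {i j : ZMod n} : vx i = vx j ↔ i = j := by
  constructor
  · intro h
    exact ZMod.val_injective n (Fin.mk.inj_iff.1 h)
  · rintro rfl; rfl


lemma vx_ne_last (i : ZMod n) : vx i ≠ Fin.last n := by
  intro h
  have := congrArg Fin.val h
  have h2 := ZMod.val_lt i
  simp [vx] at this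
  omega

lemma one_ne : (1 : ZMod n) ≠ 0 := by
  have := hn.out
  intro h
  have h2 := (ZMod.natCast_eq_zero_iff 1 n).1 (by exact_mod_cast h)
  have := Nat.le_of_dvd (by norm_num) h2
  omega

lemma two_ne : (2 : ZMod n) ≠ 0 := by
  have := hn.out
  intro h
  have h2 := (ZMod.natCast_eq_zero_iff 2 n).1 (by exact_mod_cast h)
  have := Nat.le_of_dvd (by norm_num) h2
  omega

lemma three_ne (h4 : 4 ≤ n) : (3 : ZMod n) ≠ 0 := by
  intro h
  have h2 := (ZMod.natCast_eq_zero_iff 3 n).1 (by exact_mod_cast h)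
  have := Nat.le_of_dvd (by norm_num) h2
  omega

lemma val_add_one' (i : ZMod n) : (i + 1).val = (i.val + 1) % n := by
  have := hn.out
  rw [ZMod.val_add, ZMod.val_one'' (by omega)]

/-- rim edge -/
def r (i : ZMod n) : (wheelGraph n).edgeSet := ⟨s(vx i, vx (i + 1)), by
  have h := hn.out
  rw [SimpleGraph.mem_edgeSet, wheelGraph, SimpleGraph.fromRel_adj]
  refine ⟨?_, Or.inl (Or.inl ⟨ZMod.val_lt i, ZMod.val_lt _, (val_add_one' i).symm⟩)⟩
  rw [Ne, vx_inj]
  simpa using one_ne (n := n)⟩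

/-- spoke -/
def sp (i : ZMod n) : (wheelGraph n).edgeSet := ⟨s(vx i, Fin.last n), by
  rw [SimpleGraph.mem_edgeSet, wheelGraph, SimpleGraph.fromRel_adj]
  exact ⟨vx_ne_last i, Or.inl (Or.inr ⟨ZMod.val_lt i, rfl⟩)⟩⟩

lemma r_inj {i j : ZMod n} : r i = r j ↔ i = j := by
  constructor
  · intro h
    have h := congrArg Subtype.val h
    simp only [r, Sym2.eq_iff, vx_inj] at h
    have := two_ne (n := n)
    grind
  · rintro rfl; rfl


lemma sp_inj {i j : ZMod n} : sp i = sp j ↔ i = j := by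
  constructor
  · intro h
    have h := congrArg Subtype.val h
    simp only [sp, Sym2.eq_iff, vx_inj] at h
    have := vx_ne_last i
    grind
  · rintro rfl; rfl

lemma r_ne_sp (i j : ZMod n) : r i ≠ sp j := by
  intro h
  have h := congrArg Subtype.val h
  simp only [r, sp, Sym2.eq_iff, vx_inj] at h
  have := vx_ne_last i
  have := vx_ne_last (i + 1)
  grind

lemma sp_ne_r (i j : ZMod n) : sp i ≠ r j := (r_ne_sp j i).symm

lemma edge_cases (e : (wheelGraph n).edgeSet) : (∃ i, e = r i) ∨ (∃ i, e = sp i) := by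
  have hc : ∀ a b : Fin (n + 1), ((a.val < n ∧ b.val < n ∧ (a.val + 1) % n = b.val) ∨
      (a.val < n ∧ b.val = n)) → (∃ i : ZMod n, s(a, b) = (r i : Sym2 (Fin (n + 1)))) ∨
        (∃ i : ZMod n, s(a, b) = (sp i : Sym2 (Fin (n + 1)))) := by
    rintro a b (⟨ha, hb, hab⟩ | ⟨ha, hb⟩)
    · left
      refine ⟨(a.val : ZMod n), ?_⟩
      have h1 : vx (a.val : ZMod n) = a := Fin.ext (ZMod.val_cast_of_lt ha)
      have h2 : vx ((a.val : ZMod n) + 1) = b := by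
        apply Fin.ext
        change ((a.val : ZMod n) + 1).val = _
        rw [val_add_one', ZMod.val_cast_of_lt ha, hab]
      simp only [r, h1, h2]
    · right
      refine ⟨(a.val : ZMod n), ?_⟩
      have h1 : vx (a.val : ZMod n) = a := Fin.ext (ZMod.val_cast_of_lt ha)
      have h2 : Fin.last n = b := Fin.ext hb.symm
      simp only [sp, h1, h2]
  obtain ⟨e, he⟩ := e
  induction e with
  | _ a b =>
    have he' := he
    rw [SimpleGraph.mem_edgeSet, wheelGraph, SimpleGraph.fromRel_adj] at he'
    simp only [Subtype.ext_iff]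
    rcases he'.2 with h | h
    · exact hc a b h
    · rw [Sym2.eq_swap]
      exact hc b a h

lemma D_r (i : ZMod n) (k : ℕ) : D (Finsupp.single (r i) k) =
    k • (Finsupp.single (vx i) 1 + Finsupp.single (vx (i + 1)) 1) := by
  rw [D_single]; rfl


lemma D_sp (i : ZMod n) (k : ℕ) : D (Finsupp.single (sp i) k) =
    k • (Finsupp.single (vx i) 1 + Finsupp.single (Fin.last n) 1) := by
  rw [D_single]; rfl

lemma D_rim (u : (wheelGraph n).edgeSet →₀ ℕ) (i : ZMod n) :
    D u (vx i) = u (sp i) + u (r i) + u (r (i - 1)) := by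
  classical
  induction u using Finsupp.induction_linear with
  | zero => simp
  | add f g hf hg => simp only [map_add, Finsupp.add_apply, hf, hg]; omega
  | single e k =>
    rcases edge_cases e with ⟨j, rfl⟩ | ⟨j, rfl⟩
    · rw [D_r]
      have : j + 1 = i ↔ j = i - 1 := by grind
      have h1 := one_ne (n := n)
      simp only [Finsupp.single_apply, Finsupp.smul_apply, Finsupp.add_apply, vx_inj, r_inj,
        r_ne_sp, this, smul_eq_mul, if_false]
      split_ifs <;> simp <;> ring
    · rw [D_sp]
      simp only [Finsupp.single_apply, Finsupp.smul_apply, Finsupp.add_apply, vx_inj, sp_inj,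
        sp_ne_r, (vx_ne_last _).symm, smul_eq_mul, if_false]
      split_ifs <;> simp

lemma D_hub (u : (wheelGraph n).edgeSet →₀ ℕ) :
    D u (Fin.last n) = ∑ i, u (sp i) := by
  classical
  induction u using Finsupp.induction_linear with
  | zero => simp
  | add f g hf hg => simp only [map_add, Finsupp.add_apply, hf, hg, Finset.sum_add_distrib]
  | single e k =>
    rcases edge_cases e with ⟨j, rfl⟩ | ⟨j, rfl⟩
    · rw [D_r]
      simp [vx_ne_last, r_ne_sp]
    · rw [D_sp]
      simp [Finsupp.single_apply, vx_ne_last, sp_inj]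

lemma D_eq_iff (u v : (wheelGraph n).edgeSet →₀ ℕ) : D u = D v ↔
    (∀ i, u (sp i) + u (r i) + u (r (i - 1)) = v (sp i) + v (r i) + v (r (i - 1))) ∧
      ∑ i, u (sp i) = ∑ i, v (sp i) := by
  constructor
  · intro h
    refine ⟨fun i => ?_, ?_⟩
    · rw [← D_rim, ← D_rim, h]
    · rw [← D_hub, ← D_hub, h]
  · rintro ⟨h1, h2⟩
    ext a
    by_cases ha : a = Fin.last n
    · rw [ha, D_hub, D_hub, h2]
    · have hlt : a.val < n := by
        have := a.2
        have : a.val ≠ n := fun h => ha (Fin.ext h)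
        omega
      have h3 : vx (a.val : ZMod n) = a := Fin.ext (ZMod.val_cast_of_lt hlt)
      rw [← h3, D_rim, D_rim, h1]

/-- Indicator exponent vector of a finite set of edges. -/
noncomputable def ind {σ : Type*} (E : Finset σ) : σ →₀ ℕ := ∑ e ∈ E, Finsupp.single e 1

open Classical in
lemma ind_apply {σ : Type*} (E : Finset σ) (e : σ) : ind E e = if e ∈ E then 1 else 0 := by
  simp [ind, Finsupp.finsetSum_apply, Finsupp.single_apply]

lemma ind_support {σ : Type*} (E : Finset σ) : (ind E).support = E := by
  classical
  ext e
  simp [ind_apply]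

lemma ind_le {σ : Type*} (E : Finset σ) (u : σ →₀ ℕ) (h : ∀ e ∈ E, 0 < u e) : ind E ≤ u := by
  classical
  intro e
  rw [ind_apply]
  split_ifs with he
  · exact h e he
  · exact Nat.zero_le _

end wheel
end Wheel
namespace Wheel

section cong

/-- congruence of monomials modulo an ideal -/
def Cg {K : Type*} [Field K] {σ : Type*} (J : Ideal (MvPolynomial σ K)) (u v : σ →₀ ℕ) : Prop :=
  (monomial u 1 - monomial v 1 : MvPolynomial σ K) ∈ J

variable {K : Type*} [Field K] {σ : Type*} {J : Ideal (MvPolynomial σ K)}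

lemma Cg.refl (u : σ →₀ ℕ) : Cg J u u := by simp [Cg]

lemma Cg.symm {u v : σ →₀ ℕ} (h : Cg J u v) : Cg J v u := by
  have := J.neg_mem h
  rwa [neg_sub] at this

lemma Cg.trans {u v w : σ →₀ ℕ} (h : Cg J u v) (h' : Cg J v w) : Cg J u w := by
  have := J.add_mem h h'
  rwa [sub_add_sub_cancel] at this

lemma Cg.add {u v : σ →₀ ℕ} (h : Cg J u v) (w : σ →₀ ℕ) : Cg J (w + u) (w + v) := by
  have := J.mul_mem_left (monomial w 1) h
  rw [mul_sub, monomial_mul, monomial_mul, one_mul] at this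
  exact this

/-- `u` and `v` cannot be moved to share a variable. -/
def Sep (J : Ideal (MvPolynomial σ K)) (u v : σ →₀ ℕ) : Prop :=
  ∀ u' v' e, Cg J u u' → Cg J v v' → 0 < u' e → 0 < v' e → False

lemma Sep.symm {u v : σ →₀ ℕ} (h : Sep J u v) : Sep J v u :=
  fun u' v' e h1 h2 h3 h4 => h v' u' e h2 h1 h4 h3

lemma Sep.disj {u v : σ →₀ ℕ} (h : Sep J u v) (e : σ) (hu : 0 < u e) (hv : 0 < v e) : False :=
  h u v e (Cg.refl _) (Cg.refl _) hu hv

lemma Sep.move {u v : σ →₀ ℕ} (h : Sep J u v) {A B : Finset σ} (hAB : Cg J (ind A) (ind B))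
    (hA : ∀ e ∈ A, 0 < u e) (e : σ) (he : e ∈ B) (hv : 0 < v e) : False := by
  classical
  have h1 := hAB.add (u - ind A)
  rw [tsub_add_cancel_of_le (ind_le A u hA)] at h1
  refine h _ v e h1 (Cg.refl _) ?_ hv
  rw [Finsupp.add_apply, ind_apply, if_pos he]
  omega

end cong

lemma edgeDeg_ne {V : Type*} (e : Sym2 V) : 0 < (edgeDeg e).degree := by
  induction e with
  | _ a b => simp [edgeDeg]

lemma all_cong {K : Type*} [Field K] {V : Type*} {G : SimpleGraph V}
    {J : Ideal (MvPolynomial G.edgeSet K)} (hJ : J ≤ toricIdealGraph K G)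
    (step : ∀ u v : G.edgeSet →₀ ℕ, D u = D v → u ≠ 0 → Sep J u v → False) :
    ∀ (N : ℕ) (u v : G.edgeSet →₀ ℕ), (D u).degree = N → D u = D v → Cg J u v := by
  intro N
  induction N using Nat.strong_induction_on with
  | _ N ih =>
    have hCD : ∀ u v, Cg J u v → D u = D v := fun u v h => (binom_mem K u v).1 (hJ h)
    have hz : ∀ u : G.edgeSet →₀ ℕ, D u = 0 → u = 0 := by
      intro u h
      by_contra hu
      obtain ⟨e, he⟩ := Finsupp.ne_iff.1 hu
      have : Finsupp.single e 1 + (u - Finsupp.single e 1) = u := by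
        apply add_tsub_cancel_of_le
        rw [Finsupp.single_le_iff]
        simp at he
        omega
      have h2 := congrArg (fun x => (D x).degree) this
      have h3 := edgeDeg_ne (e : Sym2 V)
      simp only [map_add, D_single, one_smul, h, map_zero] at h2
      omega
    intro u v hN huv
    by_cases hu : u = 0
    · subst hu
      rw [hz v (by rw [← huv, map_zero])]
      exact Cg.refl _
    by_contra hcon
    apply step u v huv hu
    intro u' v' e h1 h2 h3 h4
    apply hcon
    have dec : ∀ w : G.edgeSet →₀ ℕ, 0 < w e →
        Finsupp.single e 1 + (w - Finsupp.single e 1) = w := by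
      intro w hw
      apply add_tsub_cancel_of_le
      rw [Finsupp.single_le_iff]
      exact hw
    have e1 := dec u' h3
    have e2 := dec v' h4
    have d1 := hCD _ _ h1
    have d2 := hCD _ _ h2
    have hd : D (u' - Finsupp.single e 1) = D (v' - Finsupp.single e 1) := by
      have : D u' = D v' := by rw [← d1, ← d2, huv]
      rw [← e1, ← e2, map_add, map_add] at this
      exact add_left_cancel this
    have hlt : (D (u' - Finsupp.single e 1)).degree < N := by
      have h5 := congrArg (fun x => (D x).degree) e1
      have h6 := edgeDeg_ne (e : Sym2 V)
      simp only [map_add, D_single, one_smul, ← d1, hN] at h5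
      omega
    have := (ih _ hlt _ _ rfl hd).add (Finsupp.single e 1)
    rw [e1, e2] at this
    exact h1.trans (this.trans h2.symm)

section wheel

variable {n : ℕ} [NeZero n] [hn : Fact (3 ≤ n)]

open Classical in
/-- supports of the quadrics -/
noncomputable def Q (b : Bool) (i : ZMod n) : Finset (wheelGraph n).edgeSet :=
  if b then {r i, sp (i + 2)} else {sp i, r (i + 1)}

open Classical in
/-- supports of the cubics -/
noncomputable def Cu (i k : ZMod n) : Finset (wheelGraph n).edgeSet :=
  {r i, sp k, sp (k + 1)}

open Classical in
/-- supports of the rim binomial -/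
noncomputable def M (b : Bool) : Finset (wheelGraph n).edgeSet :=
  (Finset.univ.filter (fun i : ZMod n => decide (i.val % 2 = 0) = b)).image r

/-- distance condition on pairs of rim edges -/
def Far (i k : ZMod n) : Prop :=
  i ≠ k ∧ i + 1 ≠ k ∧ k + 1 ≠ i ∧ i + 2 ≠ k ∧ k + 2 ≠ i

lemma parity_succ (hev : Even n) (i : ZMod n) :
    ((i + 1).val % 2 = 0) ↔ ¬ (i.val % 2 = 0) := by
  rw [val_add_one']
  have h1 := ZMod.val_lt i
  obtain ⟨m, hm⟩ := hev
  rcases Nat.lt_or_ge (i.val + 1) n with h | h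
  · rw [Nat.mod_eq_of_lt h]; omega
  · have : i.val + 1 = n := by omega
    rw [this, Nat.mod_self]; omega

lemma mem_M {b : Bool} {i : ZMod n} : r i ∈ M b ↔ (decide (i.val % 2 = 0) = b) := by
  classical
  simp [M, r_inj]

lemma sp_not_mem_M {b : Bool} {i : ZMod n} : sp i ∉ M b := by
  classical
  simp [M, r_ne_sp]

lemma D_Q (i : ZMod n) : D (ind (Q false i)) = D (ind (Q true i)) := by
  classical
  have : i + 1 + 1 = i + 2 := by ring
  simp only [ind, Q, if_true, Bool.false_eq_true, if_false]
  rw [Finset.sum_pair (sp_ne_r _ _), Finset.sum_pair (r_ne_sp _ _)]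
  simp only [map_add, D_r, D_sp, one_smul, this]
  abel

lemma D_Cu_eq (i k : ZMod n) : D (ind (Cu i k)) = D (Finsupp.single (r i) 1) +
    (D (Finsupp.single (sp k) 1) + D (Finsupp.single (sp (k + 1)) 1)) := by
  classical
  have : sp k ≠ sp (k + 1) := by
    rw [Ne, sp_inj]; simpa using one_ne (n := n)
  simp only [ind, Cu]
  rw [Finset.sum_insert (by simp [r_ne_sp]), Finset.sum_pair this]
  simp only [map_add]

lemma D_Cu (i k : ZMod n) : D (ind (Cu i k)) = D (ind (Cu k i)) := by
  rw [D_Cu_eq, D_Cu_eq]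
  simp only [D_r, D_sp, one_smul]
  abel

lemma D_M (hev : Even n) : D (ind (M (n := n) false)) = D (ind (M true)) := by
  classical
  rw [D_eq_iff]
  refine ⟨fun i => ?_, ?_⟩
  · simp only [ind_apply, sp_not_mem_M, mem_M]
    have := parity_succ hev (i - 1)
    rw [sub_add_cancel] at this
    by_cases h : i.val % 2 = 0
    · have h' := this.1 h
      simp [h, h']
    · have h' : (i - 1).val % 2 = 0 := by
        by_contra h2
        exact h (this.2 h2)
      simp [h, h']
  · simp only [ind_apply, sp_not_mem_M]

lemma step {K : Type*} [Field K] {J : Ideal (MvPolynomial (wheelGraph n).edgeSet K)}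
    (hQ : ∀ i : ZMod n, Cg J (ind (Q false i)) (ind (Q true i)))
    (hC : ∀ i k : ZMod n, Far i k → Cg J (ind (Cu i k)) (ind (Cu k i)))
    (hM : Even n → Cg J (ind (M (n := n) false)) (ind (M true)))
    (u v : (wheelGraph n).edgeSet →₀ ℕ) (huv : D u = D v) (hu : u ≠ 0) (hS : Sep J u v) :
    False := by
  classical
  -- quadric moves
  have q1 : ∀ {u v : (wheelGraph n).edgeSet →₀ ℕ}, Sep J u v → ∀ i : ZMod n,
      0 < u (sp i) → 0 < u (r (i + 1)) → v (r i) = 0 ∧ v (sp (i + 2)) = 0 := by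
    intro u v hS i h1 h2
    have := hS.move (hQ i) (by simp [Q, h1, h2])
    simp only [Q, if_true, Finset.mem_insert, Finset.mem_singleton] at this
    constructor
    · by_contra h; exact this _ (Or.inl rfl) (Nat.pos_of_ne_zero h)
    · by_contra h; exact this _ (Or.inr rfl) (Nat.pos_of_ne_zero h)
  have q2 : ∀ {u v : (wheelGraph n).edgeSet →₀ ℕ}, Sep J u v → ∀ i : ZMod n,
      0 < u (r i) → 0 < u (sp (i + 2)) → v (sp i) = 0 ∧ v (r (i + 1)) = 0 := by
    intro u v hS i h1 h2
    have := hS.move (hQ i).symm (by simp [Q, h1, h2])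
    simp only [Q, Bool.false_eq_true, if_false, Finset.mem_insert, Finset.mem_singleton] at this
    constructor
    · by_contra h; exact this _ (Or.inl rfl) (Nat.pos_of_ne_zero h)
    · by_contra h; exact this _ (Or.inr rfl) (Nat.pos_of_ne_zero h)
  -- a spoke of `u` gives a triangle
  have tri : ∀ {u v : (wheelGraph n).edgeSet →₀ ℕ}, D u = D v → Sep J u v → ∀ i : ZMod n,
      0 < u (sp i) → ∃ k, 0 < u (sp k) ∧ 0 < u (sp (k + 1)) ∧ 0 < v (r k) := by
    intro u v huv hS i hi
    have hd := ((D_eq_iff u v).1 huv).1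
    have hi' : v (sp i) = 0 := by
      by_contra h; exact hS.disj _ hi (Nat.pos_of_ne_zero h)
    have d0 := hd i
    by_cases hr : 0 < v (r i)
    · refine ⟨i, hi, ?_, hr⟩
      have d1 := hd (i + 1)
      rw [add_sub_cancel_right] at d1
      by_contra h
      have hri : u (r i) = 0 := by
        by_contra h; exact hS.disj _ (Nat.pos_of_ne_zero h) hr
      have h2 : 0 < u (r (i + 1)) := by omega
      have := (q1 hS i hi h2).1
      omega
    · have hr' : 0 < v (r (i - 1)) := by omega
      refine ⟨i - 1, ?_, by rwa [sub_add_cancel], hr'⟩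
      have d1 := hd (i - 1)
      by_contra h
      have hri : u (r (i - 1)) = 0 := by
        by_contra h; exact hS.disj _ (Nat.pos_of_ne_zero h) hr'
      have h2 : 0 < u (r (i - 1 - 1)) := by omega
      have := (q2 hS (i - 1 - 1) h2 (by rwa [show i - 1 - 1 + 2 = i by ring])).2
      rw [sub_add_cancel] at this
      omega
  by_cases hsp : ∃ i, 0 < u (sp i)
  · obtain ⟨i0, hi0⟩ := hsp
    have hsum := ((D_eq_iff u v).1 huv).2
    have hv : ∃ j, 0 < v (sp j) := by
      by_contra hcon
      push Not at hcon
      have h1 : ∑ i, v (sp i) = 0 := Finset.sum_eq_zero (fun i _ => Nat.le_zero.1 (hcon i))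
      have h2 : u (sp i0) ≤ ∑ i, u (sp i) :=
        Finset.single_le_sum (f := fun i => u (sp i)) (fun _ _ => Nat.zero_le _) (Finset.mem_univ i0)
      omega
    obtain ⟨j0, hj0⟩ := hv
    obtain ⟨i, a1, a2, a3⟩ := tri huv hS i0 hi0
    obtain ⟨k, b1, b2, b3⟩ := tri huv.symm hS.symm j0 hj0
    have hdis : ∀ i j, 0 < u (sp i) → 0 < v (sp j) → i ≠ j := by
      rintro i j h1 h2 rfl
      exact hS.disj _ h1 h2
    by_cases c1 : i + 2 = k
    · have := (q2 hS.symm i a3 (c1 ▸ b1)).1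
      omega
    by_cases c2 : k + 2 = i
    · have := (q2 hS k b3 (c2 ▸ a1)).1
      omega
    have hfar : Far k i := ⟨(hdis _ _ a1 b1).symm, (hdis _ _ a1 b2).symm, hdis _ _ a2 b1, c2, c1⟩
    exact hS.move (hC k i hfar) (by simp [Cu, a1, a2, b3]) (r i) (by simp [Cu]) a3
  · push Not at hsp
    have hsu : ∀ i, u (sp i) = 0 := fun i => Nat.le_zero.1 (hsp i)
    have hsum := ((D_eq_iff u v).1 huv).2
    have hd := ((D_eq_iff u v).1 huv).1
    have hsv : ∀ i, v (sp i) = 0 := by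
      rw [Finset.sum_eq_zero (fun i _ => hsu i)] at hsum
      intro i
      exact (Finset.sum_eq_zero_iff.1 hsum.symm) i (Finset.mem_univ i)
    obtain ⟨k, hk⟩ : ∃ k, 0 < u (r k) := by
      by_contra hcon
      push Not at hcon
      apply hu
      ext e
      rcases edge_cases e with ⟨j, rfl⟩ | ⟨j, rfl⟩
      · simpa using hcon j
      · simpa using hsu j
    have adv : ∀ {u v : (wheelGraph n).edgeSet →₀ ℕ}, D u = D v → Sep J u v →
        (∀ i, v (sp i) = 0) → ∀ i, 0 < u (r i) → 0 < v (r (i + 1)) := by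
      intro u v huv hS hsv i hi
      have d1 := ((D_eq_iff u v).1 huv).1 (i + 1)
      rw [add_sub_cancel_right, hsv] at d1
      have : v (r i) = 0 := by
        by_contra h; exact hS.disj _ hi (Nat.pos_of_ne_zero h)
      omega
    have walk : ∀ m : ℕ, 0 < u (r (k + (2 * m : ℕ))) := by
      intro m
      induction m with
      | zero => simpa using hk
      | succ m ih =>
        have h1 := adv huv hS hsv _ ih
        have h2 := adv huv.symm hS.symm hsu _ h1
        have : k + ((2 * (m + 1) : ℕ) : ZMod n) = k + (2 * m : ℕ) + 1 + 1 := by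
          push_cast; ring
        rwa [this]
    rcases Nat.even_or_odd n with hev | ⟨m, hm⟩
    · have hall : ∀ j : ZMod n, (decide (j.val % 2 = 0) = decide (k.val % 2 = 0)) →
          0 < u (r j) := by
        intro j hj
        simp only [decide_eq_decide] at hj
        obtain ⟨p, hp⟩ := hev
        have hkl := ZMod.val_lt k
        have hw := walk ((j.val + n - k.val) / 2)
        have e1 : 2 * ((j.val + n - k.val) / 2) = j.val + n - k.val := by omega
        have e2 : k + ((j.val + n - k.val : ℕ) : ZMod n) = j := by
          rw [Nat.cast_sub (by omega)]
          simp
        rwa [e1, e2] at hw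
      have hv1 := adv huv hS hsv _ hk
      have hpar := parity_succ hev k
      have hMk : ∀ b, Cg J (ind (M (n := n) b)) (ind (M (!b))) := by
        rintro (_ | _)
        · exact hM hev
        · exact (hM hev).symm
      refine hS.move (hMk (decide (k.val % 2 = 0))) ?_ (r (k + 1)) ?_ hv1
      · intro e he
        rcases edge_cases e with ⟨j, rfl⟩ | ⟨j, rfl⟩
        · exact hall j (mem_M.1 he)
        · exact absurd he sp_not_mem_M
      · rw [mem_M, ← decide_not, decide_eq_decide]
        exact hpar
    · have h1 := adv huv hS hsv _ (walk m)
      have e1 : k + ((2 * m : ℕ) : ZMod n) + 1 = k := by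
        have : ((2 * m + 1 : ℕ) : ZMod n) = 0 := by rw [← hm]; simp
        push_cast at this ⊢
        rw [add_assoc, this, add_zero]
      rw [e1] at h1
      exact hS.disj _ hk h1

lemma span_eq {K : Type*} [Field K] {J : Ideal (MvPolynomial (wheelGraph n).edgeSet K)}
    (hJ : J ≤ toricIdealGraph K (wheelGraph n))
    (hQ : ∀ i : ZMod n, Cg J (ind (Q false i)) (ind (Q true i)))
    (hC : ∀ i k : ZMod n, Far i k → Cg J (ind (Cu i k)) (ind (Cu k i)))
    (hM : Even n → Cg J (ind (M (n := n) false)) (ind (M true))) :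
    J = toricIdealGraph K (wheelGraph n) :=
  le_antisymm hJ (toric_le K J (fun u v h => all_cong hJ (step hQ hC hM) _ u v rfl h))

end wheel
end Wheel
namespace Wheel

section wheel

variable {n : ℕ} [NeZero n] [hn : Fact (3 ≤ n)]

lemma supp_sub {σ : Type*} (u : σ →₀ ℕ) (E : Finset σ) :
    u.support ⊆ E ↔ ∀ e, e ∉ E → u e = 0 := by
  constructor
  · intro h e he
    by_contra h2
    exact he (h (Finsupp.mem_support_iff.2 h2))
  · intro h e he
    by_contra h2
    exact Finsupp.mem_support_iff.1 he (h e h2)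

/-- An exponent vector using only spokes is alone in its fiber. -/
lemma rigid_spokes (u v : (wheelGraph n).edgeSet →₀ ℕ) (huv : D u = D v)
    (h : ∀ i, u (r i) = 0) : (∀ i, v (r i) = 0) ∧ ∀ i, v (sp i) = u (sp i) := by
  obtain ⟨h1, h2⟩ := (D_eq_iff u v).1 huv
  have h3 : ∑ i : ZMod n, u (sp i) = ∑ i : ZMod n, (v (sp i) + v (r i) + v (r (i - 1))) := by
    apply Finset.sum_congr rfl
    intro i _
    rw [← h1 i, h, h]
    simp
  rw [Finset.sum_add_distrib, Finset.sum_add_distrib] at h3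
  have h4 : ∑ i : ZMod n, v (r i) = 0 := by omega
  have h5 : ∀ i, v (r i) = 0 := fun i => (Finset.sum_eq_zero_iff.1 h4) i (Finset.mem_univ i)
  refine ⟨h5, fun i => ?_⟩
  have := h1 i
  rw [h, h, h5, h5] at this
  omega

lemma rigid_rim (u v : (wheelGraph n).edgeSet →₀ ℕ) (huv : D u = D v) (i : ZMod n)
    (h : ∀ j, j ≠ i → u (r j) = 0) (hs : ∀ j, u (sp j) = 0) :
    (∀ j, j ≠ i → v (r j) = 0) ∧ ∀ j, v (sp j) = 0 := by
  obtain ⟨h1, h2⟩ := (D_eq_iff u v).1 huv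
  have t2 := two_ne (n := n)
  have h3 : ∀ j, v (sp j) = 0 := by
    rw [Finset.sum_eq_zero (fun i _ => hs i)] at h2
    intro i
    exact (Finset.sum_eq_zero_iff.1 h2.symm) i (Finset.mem_univ i)
  refine ⟨fun j hj => ?_, h3⟩
  by_cases hj1 : j - 1 = i
  · have := h1 (j + 1)
    rw [add_sub_cancel_right, h j hj, hs,
      h (j + 1) (by intro h; apply t2; linear_combination h - hj1)] at this
    omega
  · have := h1 j
    rw [h j hj, hs, h (j - 1) hj1] at this
    omega

lemma rigid_mixed (u v : (wheelGraph n).edgeSet →₀ ℕ) (huv : D u = D v) (i a : ZMod n)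
    (h : ∀ j, j ≠ i → u (r j) = 0) (hs : ∀ j, j ≠ a → u (sp j) = 0)
    (a1 : a ≠ i) (a2 : a ≠ i + 1) (a3 : a + 1 ≠ i) (a4 : a ≠ i + 2) :
    (∀ j, j ≠ i → v (r j) = 0) ∧ ∀ j, j ≠ a → v (sp j) = 0 := by
  obtain ⟨h1, h2⟩ := (D_eq_iff u v).1 huv
  have t2 := two_ne (n := n)
  have t1 : (1 : ZMod n) ≠ 0 := one_ne
  have z : ∀ w, w ≠ i → w ≠ i + 1 → w ≠ a → v (r w) = 0 ∧ v (r (w - 1)) = 0 := by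
    intro w w1 w2 w3
    have := h1 w
    rw [h w w1, hs w w3, h (w - 1) (by intro h; apply w2; rw [← h]; ring)] at this
    omega
  have hr : ∀ j, j ≠ i → v (r j) = 0 := by
    intro j hj
    by_cases j1 : j = i + 1
    · have := (z (j + 1) (by intro h; apply t2; grind) (by intro h; apply t1; grind)
        (by intro h; apply a4; grind)).2
      rwa [add_sub_cancel_right] at this
    · by_cases j2 : j = a
      · have := (z (j + 1) (by intro h; apply a3; grind) (by intro h; apply a1; grind)
          (by intro h; apply t1; grind)).2
        rwa [add_sub_cancel_right] at this
      · exact (z j hj j1 j2).1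
  refine ⟨hr, ?_⟩
  have e1 := h1 a
  have a5 : a - 1 ≠ i := by intro h; apply a2; rw [← h]; ring
  rw [h a a1, h _ a5, hr a a1, hr _ a5] at e1
  have e2 : ∑ j, u (sp j) = u (sp a) :=
    Finset.sum_eq_single a (fun j _ hj => hs j hj) (fun h => absurd (Finset.mem_univ _) h)
  intro j hj
  have e3 := Finset.add_sum_erase Finset.univ (fun j => v (sp j)) (Finset.mem_univ a)
  have e4 : v (sp j) ≤ ∑ x ∈ Finset.univ.erase a, v (sp x) :=
    Finset.single_le_sum (f := fun j => v (sp j)) (fun _ _ => Nat.zero_le _)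
      (Finset.mem_erase.2 ⟨hj, Finset.mem_univ j⟩)
  omega

open Classical in
lemma min_pair (a b : ZMod n) (u v : (wheelGraph n).edgeSet →₀ ℕ) (huv : D u = D v)
    (hu : u.support ⊆ {sp a, r b}) (hv : ¬ v.support ⊆ {sp a, r b}) :
    ({sp a, r b} : Finset (wheelGraph n).edgeSet) ⊆ u.support := by
  rw [supp_sub] at hu hv
  have hr : ∀ j, j ≠ b → u (r j) = 0 := by
    intro j hj; apply hu; simp [r_ne_sp, r_inj, hj]
  have hs : ∀ j, j ≠ a → u (sp j) = 0 := by
    intro j hj; apply hu; simp [sp_ne_r, sp_inj, hj]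
  intro e he
  rw [Finsupp.mem_support_iff]
  intro h0
  apply hv
  intro f hf
  simp only [Finset.mem_insert, Finset.mem_singleton] at he hf
  rcases he with rfl | rfl
  · have h1 := rigid_rim u v huv b hr (fun j => by
      by_cases hj : j = a
      · rw [hj, h0]
      · exact hs j hj)
    rcases edge_cases f with ⟨j, rfl⟩ | ⟨j, rfl⟩
    · exact h1.1 j (by rintro rfl; exact hf (Or.inr rfl))
    · exact h1.2 j
  · have h1 := rigid_spokes u v huv (fun j => by
      by_cases hj : j = b
      · rw [hj, h0]
      · exact hr j hj)
    rcases edge_cases f with ⟨j, rfl⟩ | ⟨j, rfl⟩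
    · exact h1.1 j
    · rw [h1.2 j]
      exact hs j (by rintro rfl; exact hf (Or.inl rfl))

lemma min_Q (x : Bool) (i : ZMod n) (u v : (wheelGraph n).edgeSet →₀ ℕ) (huv : D u = D v)
    (hu : u.support ⊆ Q x i) (hv : ¬ v.support ⊆ Q x i) : Q x i ⊆ u.support := by
  classical
  cases x
  · have : Q false i = {sp i, r (i + 1)} := by simp [Q]
    rw [this] at hu hv ⊢
    exact min_pair i (i + 1) u v huv hu hv
  · have : Q true i = {sp (i + 2), r i} := by simp [Q, Finset.pair_comm]
    rw [this] at hu hv ⊢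
    exact min_pair (i + 2) i u v huv hu hv

lemma min_Cu (i k : ZMod n) (hf : Far i k) (u v : (wheelGraph n).edgeSet →₀ ℕ) (huv : D u = D v)
    (hu : u.support ⊆ Cu i k) (hv : ¬ v.support ⊆ Cu i k) : Cu i k ⊆ u.support := by
  classical
  obtain ⟨f1, f2, f3, f4, f5⟩ := hf
  rw [supp_sub] at hu hv
  have hr : ∀ j, j ≠ i → u (r j) = 0 := by
    intro j hj; apply hu; simp [Cu, r_ne_sp, r_inj, hj]
  have hs : ∀ j, j ≠ k → j ≠ k + 1 → u (sp j) = 0 := by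
    intro j hj hj'; apply hu; simp [Cu, sp_ne_r, sp_inj, hj, hj']
  intro e he
  rw [Finsupp.mem_support_iff]
  intro h0
  apply hv
  intro f hf
  simp only [Cu, Finset.mem_insert, Finset.mem_singleton] at he hf
  rcases he with rfl | rfl | rfl
  · have h1 := rigid_spokes u v huv (fun j => by
      by_cases hj : j = i
      · rw [hj, h0]
      · exact hr j hj)
    rcases edge_cases f with ⟨j, rfl⟩ | ⟨j, rfl⟩
    · exact h1.1 j
    · rw [h1.2 j]
      exact hs j (by rintro rfl; exact hf (Or.inr (Or.inl rfl)))
        (by rintro rfl; exact hf (Or.inr (Or.inr rfl)))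
  · have h1 := rigid_mixed u v huv i (k + 1) hr (fun j hj => by
      by_cases hj' : j = k
      · rw [hj', h0]
      · exact hs j hj' hj) f3 (fun h => f1 (add_right_cancel h).symm)
        (fun h => f5 (by rw [← h]; ring))
        (fun h => f2 (add_right_cancel (b := 1) (by rw [h]; ring)))
    rcases edge_cases f with ⟨j, rfl⟩ | ⟨j, rfl⟩
    · exact h1.1 j (by rintro rfl; exact hf (Or.inl rfl))
    · exact h1.2 j (by rintro rfl; exact hf (Or.inr (Or.inr rfl)))
  · have h1 := rigid_mixed u v huv i k hr (fun j hj => by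
      by_cases hj' : j = k + 1
      · rw [hj', h0]
      · exact hs j hj hj') f1.symm f2.symm f3 f4.symm
    rcases edge_cases f with ⟨j, rfl⟩ | ⟨j, rfl⟩
    · exact h1.1 j (by rintro rfl; exact hf (Or.inl rfl))
    · exact h1.2 j (by rintro rfl; exact hf (Or.inr (Or.inl rfl)))

lemma min_M (hev : Even n) (b : Bool) (u v : (wheelGraph n).edgeSet →₀ ℕ) (huv : D u = D v)
    (hu : u.support ⊆ M b) (hv : ¬ v.support ⊆ M b) : M b ⊆ u.support := by
  classical
  rw [supp_sub] at hu hv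
  obtain ⟨h1, h2⟩ := (D_eq_iff u v).1 huv
  have hs : ∀ j, u (sp j) = 0 := fun j => hu _ sp_not_mem_M
  have hvs : ∀ j, v (sp j) = 0 := by
    rw [Finset.sum_eq_zero (fun i _ => hs i)] at h2
    intro i
    exact (Finset.sum_eq_zero_iff.1 h2.symm) i (Finset.mem_univ i)
  push Not at hv
  obtain ⟨e, he, hve⟩ := hv
  rcases edge_cases e with ⟨k, rfl⟩ | ⟨k, rfl⟩
  swap
  · exact absurd (hvs k) hve
  have hnot : ∀ j : ZMod n, r j ∉ M b → r (j + 1) ∈ M b ∧ r (j + 1 + 1) ∉ M b := by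
    intro j hj
    have p1 := parity_succ hev j
    have p2 := parity_succ hev (j + 1)
    rw [mem_M] at hj ⊢
    rw [mem_M]
    cases b <;> simp_all
  have adv : ∀ j : ZMod n, r j ∉ M b → 0 < v (r j) → 0 < u (r (j + 1)) ∧ 0 < v (r (j + 1 + 1)) := by
    intro j hj hvj
    have d1 := h1 (j + 1)
    have d2 := h1 (j + 1 + 1)
    rw [add_sub_cancel_right, hs, hvs, hu _ hj] at d1
    rw [add_sub_cancel_right, hs, hvs, hu _ (hnot j hj).2] at d2
    omega
  have walk : ∀ m : ℕ, r (k + ((2 * m : ℕ) : ZMod n)) ∉ M b ∧ 0 < v (r (k + (2 * m : ℕ))) := by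
    intro m
    induction m with
    | zero => simpa using ⟨he, Nat.pos_of_ne_zero hve⟩
    | succ m ih =>
      have : k + ((2 * (m + 1) : ℕ) : ZMod n) = k + (2 * m : ℕ) + 1 + 1 := by
        push_cast; ring
      rw [this]
      exact ⟨(hnot _ ih.1).2, (adv _ ih.1 ih.2).2⟩
  intro f hf
  rcases edge_cases f with ⟨j, rfl⟩ | ⟨j, rfl⟩
  swap
  · exact absurd hf sp_not_mem_M
  rw [Finsupp.mem_support_iff]
  have hpar : (j.val % 2 = 0) ↔ ¬ (k.val % 2 = 0) := by
    rw [mem_M] at hf he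
    cases b <;> simp_all
  obtain ⟨p, hp⟩ := hev
  have hkl := ZMod.val_lt k
  have hw := walk ((j.val + n - k.val - 1) / 2)
  have hw' := (adv _ hw.1 hw.2).1
  have e1 : 2 * ((j.val + n - k.val - 1) / 2) = j.val + n - k.val - 1 := by omega
  have e2 : k + ((j.val + n - k.val - 1 : ℕ) : ZMod n) + 1 = j := by
    rw [Nat.cast_sub (by omega), Nat.cast_sub (by omega)]
    simp
    ring
  rw [e1, e2] at hw'
  omega

/-- index set of the generators -/
abbrev Idx (n : ℕ) : Type :=
  ZMod n ⊕ {p : ZMod n × ZMod n // p.1.val < p.2.val ∧ Far p.1 p.2} ⊕ {_x : Unit // Even n}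

/-- the two supports of each generator -/
noncomputable def Es (b : Bool) : Idx n → Finset (wheelGraph n).edgeSet
  | Sum.inl i => Q b i
  | Sum.inr (Sum.inl p) => if b then Cu p.1.2 p.1.1 else Cu p.1.1 p.1.2
  | Sum.inr (Sum.inr _) => M b

lemma Far.symm {i k : ZMod n} (h : Far i k) : Far k i :=
  ⟨h.1.symm, h.2.2.1, h.2.1, h.2.2.2.2, h.2.2.2.1⟩

lemma D_Es (x : Idx n) : D (ind (Es false x)) = D (ind (Es true x)) := by
  rcases x with i | p | e
  · exact D_Q i
  · exact D_Cu _ _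
  · exact D_M e.2

lemma min_Es (b : Bool) (x : Idx n) (u v : (wheelGraph n).edgeSet →₀ ℕ) (huv : D u = D v)
    (hu : u.support ⊆ Es b x) (hv : ¬ v.support ⊆ Es b x) : Es b x ⊆ u.support := by
  rcases x with i | p | e
  · exact min_Q b i u v huv hu hv
  · cases b
    · exact min_Cu _ _ p.2.2 u v huv hu hv
    · exact min_Cu _ _ p.2.2.symm u v huv hu hv
  · exact min_M e.2 b u v huv hu hv

lemma sp_mem_Q {b : Bool} {i j : ZMod n} : sp j ∈ Q b i ↔ j = if b then i + 2 else i := by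
  classical
  cases b <;> simp [Q, sp_inj, sp_ne_r]

lemma r_mem_Q {b : Bool} {i j : ZMod n} : r j ∈ Q b i ↔ j = if b then i else i + 1 := by
  classical
  cases b <;> simp [Q, r_inj, r_ne_sp]

lemma sp_mem_Cu {i k j : ZMod n} : sp j ∈ Cu i k ↔ j = k ∨ j = k + 1 := by
  classical
  simp [Cu, sp_inj, sp_ne_r]

lemma r_mem_Cu {i k j : ZMod n} : r j ∈ Cu i k ↔ j = i := by
  classical
  simp [Cu, r_inj, r_ne_sp]

lemma Q_inj (h4 : 4 ≤ n) {b b' : Bool} {i i' : ZMod n} (h : Q b i = Q b' i') :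
    i = i' ∧ b = b' := by
  have t3 := three_ne h4
  have h1 : sp (if b then i + 2 else i) ∈ Q b' i' := by rw [← h, sp_mem_Q]
  have h2 : r (if b then i else i + 1) ∈ Q b' i' := by rw [← h, r_mem_Q]
  rw [sp_mem_Q] at h1
  rw [r_mem_Q] at h2
  cases b <;> cases b' <;> simp at h1 h2
  · exact ⟨h1, rfl⟩
  · exact absurd (show (3 : ZMod n) = 0 by grind) t3
  · exact absurd (show (3 : ZMod n) = 0 by grind) t3
  · exact ⟨h2, rfl⟩

lemma Q_ne_Cu {b : Bool} {i j k : ZMod n} (h : Q b i = Cu j k) : False := by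
  have h1 : sp k ∈ Q b i := by rw [h, sp_mem_Cu]; left; rfl
  have h2 : sp (k + 1) ∈ Q b i := by rw [h, sp_mem_Cu]; right; rfl
  rw [sp_mem_Q] at h1 h2
  rw [← h1] at h2
  exact one_ne (n := n) (by simpa using h2)

lemma Q_ne_M {b b' : Bool} {i : ZMod n} (h : Q b i = M b') : False :=
  sp_not_mem_M (b := b') (by rw [← h]; exact sp_mem_Q.2 rfl)

lemma Cu_ne_M {b' : Bool} {i k : ZMod n} (h : Cu i k = M b') : False :=
  sp_not_mem_M (b := b') (by rw [← h]; exact sp_mem_Cu.2 (Or.inl rfl))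

lemma Cu_inj {i k i' k' : ZMod n} (h : Cu i k = Cu i' k') : i = i' ∧ k = k' := by
  have t2 := two_ne (n := n)
  have h0 : r i ∈ Cu i' k' := by rw [← h, r_mem_Cu]
  have h1 : sp k ∈ Cu i' k' := by rw [← h, sp_mem_Cu]; left; rfl
  have h2 : sp (k + 1) ∈ Cu i' k' := by rw [← h, sp_mem_Cu]; right; rfl
  rw [r_mem_Cu] at h0
  rw [sp_mem_Cu] at h1 h2
  refine ⟨h0, ?_⟩
  rcases h1 with h1 | h1
  · exact h1
  · rcases h2 with h2 | h2
    · exact absurd (show (2 : ZMod n) = 0 by grind) t2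
    · exact add_right_cancel h2

lemma M_inj {b b' : Bool} (h : M (n := n) b = M b') : b = b' := by
  have h0 : (r (0 : ZMod n) ∈ M b) ↔ (r (0 : ZMod n) ∈ M b') := by rw [h]
  rw [mem_M, mem_M] at h0
  cases b <;> cases b' <;> simp at h0 ⊢

lemma Es_inj (h4 : 4 ≤ n) :
    Function.Injective (fun y : Idx n × Bool => Es y.2 y.1) := by
  rintro ⟨x, b⟩ ⟨x', b'⟩ h
  simp only at h
  rcases x with i | ⟨⟨p, q⟩, hp⟩ | e <;> rcases x' with i' | ⟨⟨p', q'⟩, hp'⟩ | e'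
  · obtain ⟨rfl, rfl⟩ := Q_inj h4 h
    rfl
  · cases b' <;> exact (Q_ne_Cu h).elim
  · exact (Q_ne_M h).elim
  · cases b <;> exact (Q_ne_Cu h.symm).elim
  · simp only at hp hp'
    cases b <;> cases b' <;> obtain ⟨rfl, rfl⟩ := Cu_inj h
    · rfl
    · exact absurd hp'.1 (not_lt_of_gt hp.1)
    · exact absurd hp'.1 (not_lt_of_gt hp.1)
    · rfl
  · cases b <;> exact (Cu_ne_M h).elim
  · exact (Q_ne_M h.symm).elim
  · cases b' <;> exact (Cu_ne_M h.symm).elim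
  · obtain rfl := M_inj h
    obtain rfl : e = e' := Subsingleton.elim _ _
    rfl

/-- gens -/
noncomputable def gen (K : Type*) [Field K] (A B : Finset (wheelGraph n).edgeSet) :
    MvPolynomial (wheelGraph n).edgeSet K := monomial (ind A) 1 - monomial (ind B) 1

lemma not_sub (h4 : 4 ≤ n) (b : Bool) (x : Idx n) : ¬ Es (!b) x ⊆ Es b x := by
  rcases x with i | ⟨⟨p, q⟩, hp⟩ | e
  · intro h
    have h1 : sp _ ∈ Q b i := h (sp_mem_Q.2 rfl)
    rw [sp_mem_Q] at h1
    have t2 := two_ne (n := n)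
    cases b <;> simp at h1
    · exact t2 h1
    · exact t2 h1
  · intro h
    have hne : p ≠ q := hp.2.1
    cases b
    · have h1 : r q ∈ Cu p q := h (r_mem_Cu.2 rfl)
      exact hne (r_mem_Cu.1 h1).symm
    · have h1 : r p ∈ Cu q p := h (r_mem_Cu.2 rfl)
      exact hne (r_mem_Cu.1 h1)
  · intro h
    have hj : ∃ j : ZMod n, r j ∈ M (!b) := by
      have p1 := parity_succ e.2 (0 : ZMod n)
      cases b
      · exact ⟨0, by rw [mem_M]; simp⟩
      · exact ⟨0 + 1, by rw [mem_M]; simpa using p1⟩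
    obtain ⟨j, hj⟩ := hj
    have h1 : r j ∈ M b := h hj
    rw [mem_M] at hj h1
    rw [h1] at hj
    cases b <;> simp at hj

lemma main4 (K : Type*) [Field K] (h4 : 4 ≤ n) :
    barI (toricIdealGraph K (wheelGraph n)) = muI (toricIdealGraph K (wheelGraph n)) := by
  classical
  let g : Idx n → MvPolynomial (wheelGraph n).edgeSet K := fun x => gen K (Es false x) (Es true x)
  have hcg : ∀ x : Idx n, Cg (Ideal.span (Set.range g)) (ind (Es false x)) (ind (Es true x)) :=
    fun x => Ideal.subset_span ⟨x, rfl⟩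
  refine main_abstract K (ι := Idx n) (κ := Idx n × Bool) g (fun x => ⟨_, _, rfl⟩) ?_
    (fun y => Es y.2 y.1) (Es_inj h4) (fun y => min_Es y.2 y.1) ?_ ?_
  · apply span_eq
    · rw [Ideal.span_le]
      rintro _ ⟨x, rfl⟩
      exact (binom_mem K _ _).2 (D_Es x)
    · exact fun i => hcg (Sum.inl i)
    · intro i k hf
      have hne : i.val ≠ k.val := fun h => hf.1 (ZMod.val_injective n h)
      rcases lt_or_gt_of_ne hne with h | h
      · exact hcg (Sum.inr (Sum.inl ⟨(i, k), h, hf⟩))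
      · exact (hcg (Sum.inr (Sum.inl ⟨(k, i), h, hf.symm⟩))).symm
    · exact fun hev => hcg (Sum.inr (Sum.inr ⟨(), hev⟩))
  · rintro ⟨x, b⟩
    refine ⟨ind (Es b x), ind (Es (!b) x), ?_, ?_, ?_⟩
    · cases b
      · exact D_Es x
      · exact (D_Es x).symm
    · rw [ind_support]
    · rw [ind_support]
      exact not_sub h4 b x
  · rw [Fintype.card_prod, Fintype.card_bool]
    omega

end wheel

lemma main3 (K : Type*) [Field K] :
    barI (toricIdealGraph K (wheelGraph 3)) = muI (toricIdealGraph K (wheelGraph 3)) := by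
  classical
  haveI : Fact (3 ≤ 3) := ⟨le_rfl⟩
  let g : Bool → MvPolynomial (wheelGraph 3).edgeSet K := fun b =>
    gen K (Q false (if b then 1 else 0)) (Q true (if b then 1 else 0))
  have hc0 : Cg (Ideal.span (Set.range g)) (ind (Q false (0 : ZMod 3))) (ind (Q true 0)) :=
    Ideal.subset_span ⟨false, rfl⟩
  have hc1 : Cg (Ideal.span (Set.range g)) (ind (Q false (1 : ZMod 3))) (ind (Q true 1)) :=
    Ideal.subset_span ⟨true, rfl⟩
  have hcyc : ∀ i j : ZMod 3, j = i + 2 → Q true i = Q false j := by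
    rintro i j rfl
    have : i + 2 + 1 = i := by revert i; decide
    simp [Q, this, Finset.pair_comm]
  have hc2 : Cg (Ideal.span (Set.range g)) (ind (Q false (2 : ZMod 3))) (ind (Q true 2)) := by
    rw [← hcyc 0 2 (by decide), hcyc 2 1 (by decide)]
    refine hc0.symm.trans ?_
    rw [← hcyc 1 0 (by decide)]
    exact hc1.symm
  refine main_abstract K (ι := Bool) (κ := ZMod 3) g (fun x => ⟨_, _, rfl⟩) ?_
    (fun i => Q false i) ?_ (fun i => min_Q false i) ?_ ?_
  · apply span_eq
    · rw [Ideal.span_le]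
      rintro _ ⟨x, rfl⟩
      exact (binom_mem K _ _).2 (D_Q _)
    · intro i
      have : i = 0 ∨ i = 1 ∨ i = 2 := by revert i; decide
      rcases this with rfl | rfl | rfl
      · exact hc0
      · exact hc1
      · exact hc2
    · intro i k hf
      exfalso
      have : ∀ i k : ZMod 3,
          ¬ (i ≠ k ∧ i + 1 ≠ k ∧ k + 1 ≠ i ∧ i + 2 ≠ k ∧ k + 2 ≠ i) := by decide
      exact this i k hf
    · intro h
      exact absurd h (by decide)
  · intro i j h
    have h1 : sp i ∈ Q false j := by
      rw [← show Q false i = Q false j from h, sp_mem_Q]; rfl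
    simpa [sp_mem_Q] using h1
  · intro i
    refine ⟨ind (Q false i), ind (Q true i), D_Q i, ?_, ?_⟩
    · rw [ind_support]
    · rw [ind_support]
      intro h
      have h1 : sp _ ∈ Q false i := h (sp_mem_Q.2 rfl)
      rw [sp_mem_Q] at h1
      have t2 := two_ne (n := 3)
      simp at h1
      exact t2 h1
  · rw [Fintype.card_bool, ZMod.card]

end Wheel

theorem stmt6 (K : Type*) [Field K] (n : ℕ) (hn : 3 ≤ n) :
    barI (toricIdealGraph K (wheelGraph n)) = muI (toricIdealGraph K (wheelGraph n)) := by
  haveI : Fact (3 ≤ n) := ⟨hn⟩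
  haveI : NeZero n := ⟨by omega⟩
  rcases Nat.lt_or_ge 3 n with h | h
  · exact Wheel.main4 K h
  · obtain rfl : n = 3 := by omega
    exact Wheel.main3 K
end
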